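/- arXiv:1107.0123 — 2 statements merged into one kernel-verified Lean document; each statement's English description precedes it below -/
import Mathlib

section
/- Let S = {S_1,…,S_K} ⊂ ℂ^{d×d} and let μ_* be a θ-ergodic Borel probability measure on Σ_K^+ extremal for S. Then there exist a nonsingular matrix P ∈ ℂ^{d×d}, an integer r with 1 ≤ r ≤ d, and positive integers d_1,…,d_r with d_1 + ⋯ + d_r = d, such that each conjugate P^{-1} S_k P is block lower-triangular with diagonal blocks S̃_k^{(1)},…,S̃_k^{(r)} of sizes d_1×d_1,…,d_r×d_r respectively, each family S̃(j) = {S̃_1^{(j)},…,S̃_K^{(j)}} ⊂ ℂ^{d_j×d_j} is irreducible, and for some 1 ≤ j ≤ r one has ρ(S) = ρ(S̃(j)) and μ_* is also extremal for S̃(j). -/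
open Filter MeasureTheory Topology
open scoped ENNReal

noncomputable section

/-- The one-sided shift on `Σ_K^+ = ℕ → Fin K`. -/
def shift (K : ℕ) : (ℕ → Fin K) → ℕ → Fin K := fun i n => i (n + 1)

/-- The ordered product `S_{w 0} ⋯ S_{w (n-1)}` along a finite word `w`. -/
def finWordProd {d K : ℕ} (S : Fin K → Matrix (Fin d) (Fin d) ℂ) {n : ℕ}
    (w : Fin n → Fin K) : Matrix (Fin d) (Fin d) ℂ :=
  (List.ofFn fun t => S (w t)).prod

/-- The ordered product of the first `n` matrices along an infinite sequence. -/
def wordProd {d K : ℕ} (S : Fin K → Matrix (Fin d) (Fin d) ℂ)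
    (i : ℕ → Fin K) (n : ℕ) : Matrix (Fin d) (Fin d) ℂ :=
  (List.ofFn fun t : Fin n => S (i t)).prod

/-- The (usual) spectral radius of a complex matrix, as a real number. -/
def specRad {d : ℕ} (A : Matrix (Fin d) (Fin d) ℂ) : ℝ :=
  (spectralRadius ℂ A).toReal

/-- The generalized spectral radius of a finite family of matrices. -/
def genSpecRad {d K : ℕ} (S : Fin K → Matrix (Fin d) (Fin d) ℂ) : ℝ :=
  Filter.atTop.limsup fun n : ℕ =>
    ⨆ w : Fin n → Fin K, specRad (finWordProd S w) ^ ((n : ℝ)⁻¹)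

/-- A submultiplicative matrix norm on `d × d` complex matrices. -/
structure MatrixNorm (d : ℕ) where
  N : Matrix (Fin d) (Fin d) ℂ → ℝ
  nonneg : ∀ A, 0 ≤ N A
  definite : ∀ A, N A = 0 ↔ A = 0
  homog : ∀ (c : ℂ) (A), N (c • A) = ‖c‖ * N A
  triangle : ∀ A B, N (A + B) ≤ N A + N B
  submult : ∀ A B, N (A * B) ≤ N A * N B

/-- `μ` is extremal for `S` (w.r.t. the matrix norm `N`). -/
def IsExtremal {d K : ℕ} (S : Fin K → Matrix (Fin d) (Fin d) ℂ)
    (N : Matrix (Fin d) (Fin d) ℂ → ℝ) (μ : Measure (ℕ → Fin K)) : Prop :=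
  ∀ᵐ i ∂μ, Tendsto (fun n : ℕ => N (wordProd S i n) ^ ((n : ℝ)⁻¹))
    atTop (𝓝 (genSpecRad S))

/-- `x` is a density point of `μ`. -/
def DensityPoint {K : ℕ} (μ : Measure (ℕ → Fin K)) (x : ℕ → Fin K) : Prop :=
  ∀ U : Set (ℕ → Fin K), IsOpen U → x ∈ U → 0 < μ U

/-- `S` has the spectral finiteness property. -/
def HasFinitenessProperty {d K : ℕ} (S : Fin K → Matrix (Fin d) (Fin d) ℂ) : Prop :=
  ∃ n : ℕ, 1 ≤ n ∧ ∃ w : Fin n → Fin K,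
    genSpecRad S = specRad (finWordProd S w) ^ ((n : ℝ)⁻¹)

/-- `x` is periodic of period `π ≥ 1`. -/
def IsPeriodic {K : ℕ} (x : ℕ → Fin K) (π : ℕ) : Prop :=
  1 ≤ π ∧ ∀ n, x (n + π) = x n

/-- A family of `m × m` complex matrices is irreducible if the only common invariant
subspaces of `ℂ^m` are `{0}` and `ℂ^m`. -/
def IrreducibleFamily {m K : ℕ} (F : Fin K → Matrix (Fin m) (Fin m) ℂ) : Prop :=
  ∀ W : Submodule ℂ (Fin m → ℂ),
    (∀ k, ∀ x ∈ W, (F k).mulVec x ∈ W) → W = ⊥ ∨ W = ⊤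

open scoped Matrix Matrix.Norms.Operator

/-- **Burnside's theorem** on matrix algebras. -/
theorem subalgebra_eq_top_of_isSimpleModule {k V : Type*} [Field k] [IsAlgClosed k]
    [AddCommGroup V] [Module k V] [FiniteDimensional k V]
    (A : Subalgebra k (Module.End k V)) [IsSimpleModule A V] : A = ⊤ := by
  rw [eq_top_iff]
  intro g _
  have hsc := (IsSimpleModule.algebraMap_end_bijective_of_isAlgClosed (A := A) (V := V) k).2
  let g' : Module.End (Module.End A V) V :=
    { toFun := g
      map_add' := g.map_add
      map_smul' := fun φ v => by
        obtain ⟨c, rfl⟩ := hsc φ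
        simp }
  obtain ⟨s, hs⟩ := (inferInstance : Module.Finite k V).fg_top
  obtain ⟨a, ha⟩ := jacobson_density g' s
  have : g = a := by
    refine LinearMap.ext_on (s := (s : Set V)) hs ?_
    intro v hv
    exact ha v hv
  rw [this]
  exact a.2

theorem adjoin_eq_top_of_irreducibleFamily {m K : ℕ} (hm : 1 ≤ m)
    {F : Fin K → Matrix (Fin m) (Fin m) ℂ} (hF : IrreducibleFamily F) :
    Algebra.adjoin ℂ (Set.range F) = ⊤ := by
  have : Nonempty (Fin m) := ⟨⟨0, hm⟩⟩
  let e : Matrix (Fin m) (Fin m) ℂ ≃ₐ[ℂ] Module.End ℂ (Fin m → ℂ) := Matrix.toLinAlgEquiv'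
  let A := (Algebra.adjoin ℂ (Set.range F)).map e.toAlgHom
  have : IsSimpleModule A (Fin m → ℂ) := by
    rw [isSimpleModule_iff]
    refine ⟨fun W => ?_⟩
    have := hF (W.restrictScalars ℂ) fun k x hx => by
      have hk : e (F k) ∈ A := ⟨F k, Algebra.subset_adjoin ⟨k, rfl⟩, rfl⟩
      have := W.smul_mem (⟨e (F k), hk⟩ : A) hx
      simpa [e, Subalgebra.smul_def] using this
    simpa using this
  have h := subalgebra_eq_top_of_isSimpleModule A
  rw [eq_top_iff]
  intro X _
  have : e X ∈ A := h ▸ Algebra.mem_top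
  obtain ⟨Y, hY, hYX⟩ := this
  rwa [← e.injective hYX]

theorem span_words_eq_top {m K : ℕ} (hm : 1 ≤ m)
    {F : Fin K → Matrix (Fin m) (Fin m) ℂ} (hF : IrreducibleFamily F) :
    Submodule.span ℂ (Set.range fun l : List (Fin K) => (l.map F).prod) = ⊤ := by
  rw [eq_top_iff, ← Algebra.top_toSubmodule, ← adjoin_eq_top_of_irreducibleFamily hm hF,
    Algebra.adjoin_eq_span]
  refine Submodule.span_mono ?_
  intro X hX
  obtain ⟨l, hl, rfl⟩ := Submonoid.exists_list_of_mem_closure hX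
  have : ∃ l' : List (Fin K), l'.map F = l := by
    have h2 : l ∈ Set.range (List.map F) := by
      rw [Set.range_list_map]; exact hl
    exact h2
  obtain ⟨l', rfl⟩ := this
  exact ⟨l', rfl⟩

theorem finWordProd_eq_map_prod {d K n : ℕ} (S : Fin K → Matrix (Fin d) (Fin d) ℂ)
    (w : Fin n → Fin K) : finWordProd S w = ((List.ofFn w).map S).prod := by
  simp [finWordProd, List.map_ofFn, Function.comp_def]

theorem specRad_nonneg {d : ℕ} (A : Matrix (Fin d) (Fin d) ℂ) : 0 ≤ specRad A :=
  ENNReal.toReal_nonneg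

theorem specRad_le_norm {d : ℕ} [NeZero d] (A : Matrix (Fin d) (Fin d) ℂ) : specRad A ≤ ‖A‖ := by
  have := spectrum.spectralRadius_le_nnnorm (𝕜 := ℂ) A
  exact ENNReal.toReal_le_of_le_ofReal (norm_nonneg _) (by rw [ofReal_norm]; exact this)

theorem spectralRadius_ne_top {d : ℕ} [NeZero d] (A : Matrix (Fin d) (Fin d) ℂ) :
    spectralRadius ℂ A ≠ ⊤ :=
  ne_top_of_le_ne_top ENNReal.coe_ne_top (spectrum.spectralRadius_le_nnnorm (𝕜 := ℂ) A)

theorem norm_le_specRad {d : ℕ} [NeZero d] {A : Matrix (Fin d) (Fin d) ℂ} {z : ℂ}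
    (hz : z ∈ spectrum ℂ A) : ‖z‖ ≤ specRad A := by
  have h : (‖z‖₊ : ℝ≥0∞) ≤ spectralRadius ℂ A :=
    le_iSup₂ (f := fun (k : ℂ) (_ : k ∈ spectrum ℂ A) => (‖k‖₊ : ℝ≥0∞)) z hz
  simpa [specRad] using ENNReal.toReal_mono (spectralRadius_ne_top A) h

theorem specRad_mono {d e : ℕ} [NeZero e] {A : Matrix (Fin d) (Fin d) ℂ}
    {B : Matrix (Fin e) (Fin e) ℂ} (h : spectrum ℂ A ⊆ spectrum ℂ B) : specRad A ≤ specRad B :=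
  ENNReal.toReal_mono (spectralRadius_ne_top B)
    (iSup₂_le fun z hz => le_iSup₂ (f := fun (k : ℂ) (_ : k ∈ spectrum ℂ B) => (‖k‖₊ : ℝ≥0∞))
      z (h hz))

theorem norm_trace_le {d : ℕ} [NeZero d] (A : Matrix (Fin d) (Fin d) ℂ) :
    ‖A.trace‖ ≤ d * specRad A := by
  rw [Matrix.trace_eq_sum_roots_charpoly]
  refine (norm_multiset_sum_le _).trans ?_
  have hcard : (A.charpoly.roots.map fun x => ‖x‖).card ≤ d := by
    rw [Multiset.card_map]
    simpa using Polynomial.card_roots' A.charpoly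
  have := Multiset.sum_le_card_nsmul (A.charpoly.roots.map fun x => ‖x‖) (specRad A) (by
    intro x hx
    obtain ⟨z, hz, rfl⟩ := Multiset.mem_map.1 hx
    exact norm_le_specRad
      (Matrix.mem_spectrum_iff_isRoot_charpoly.2 (Polynomial.isRoot_of_mem_roots hz)))
  refine this.trans ?_
  rw [nsmul_eq_mul]
  gcongr
  exact specRad_nonneg A

theorem norm_one_matrix_le (d : ℕ) : ‖(1 : Matrix (Fin d) (Fin d) ℂ)‖ ≤ 1 := by
  rcases Nat.eq_zero_or_pos d with rfl | hd
  · rw [Subsingleton.elim (1 : Matrix (Fin 0) (Fin 0) ℂ) 0]; simp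
  · have : NeZero d := ⟨hd.ne'⟩
    exact norm_one.le

theorem norm_map_prod_le {d K : ℕ} {S : Fin K → Matrix (Fin d) (Fin d) ℂ} {M : ℝ}
    (hS : ∀ k, ‖S k‖ ≤ M) (hM : 1 ≤ M) (l : List (Fin K)) : ‖(l.map S).prod‖ ≤ M ^ l.length := by
  induction l with
  | nil => simpa using norm_one_matrix_le d
  | cons k l ih =>
    simp only [List.map_cons, List.prod_cons, List.length_cons, pow_succ']
    exact (norm_mul_le _ _).trans (by gcongr; exact hS k)

theorem exists_norm_bound {ι E : Type*} [Finite ι] [SeminormedAddCommGroup E] (S : ι → E) :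
    ∃ M : ℝ, 1 ≤ M ∧ ∀ k, ‖S k‖ ≤ M := by
  obtain ⟨M, hM⟩ := Set.Finite.bddAbove (Set.finite_range fun k => ‖S k‖)
  exact ⟨max 1 M, le_max_left _ _, fun k => (hM ⟨k, rfl⟩).trans (le_max_right _ _)⟩

theorem iSup_specRad_nonneg {d K : ℕ} (S : Fin K → Matrix (Fin d) (Fin d) ℂ) (n : ℕ) :
    0 ≤ ⨆ w : Fin n → Fin K, specRad (finWordProd S w) ^ ((n : ℝ)⁻¹) :=
  Real.iSup_nonneg fun _ => Real.rpow_nonneg (specRad_nonneg _) _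

theorem exists_iSup_specRad_le {d K : ℕ} [NeZero d] (S : Fin K → Matrix (Fin d) (Fin d) ℂ) :
    ∃ M : ℝ, ∀ n : ℕ,
      ⨆ w : Fin n → Fin K, specRad (finWordProd S w) ^ ((n : ℝ)⁻¹) ≤ M := by
  obtain ⟨M, hM1, hM⟩ := exists_norm_bound S
  refine ⟨M, fun n => Real.iSup_le (fun w => ?_) (by linarith)⟩
  rcases Nat.eq_zero_or_pos n with rfl | hn
  · simpa using hM1
  · have h1 : specRad (finWordProd S w) ≤ M ^ n := by
      refine (specRad_le_norm _).trans ?_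
      rw [finWordProd_eq_map_prod]
      simpa using norm_map_prod_le hM hM1 (List.ofFn w)
    calc _ ≤ (M ^ n) ^ ((n : ℝ)⁻¹) :=
          Real.rpow_le_rpow (specRad_nonneg _) h1 (by positivity)
      _ = M := Real.pow_rpow_inv_natCast (by linarith) hn.ne'

theorem isBoundedUnder_iSup_specRad {d K : ℕ} [NeZero d]
    (S : Fin K → Matrix (Fin d) (Fin d) ℂ) :
    atTop.IsBoundedUnder (· ≤ ·) fun n : ℕ =>
      ⨆ w : Fin n → Fin K, specRad (finWordProd S w) ^ ((n : ℝ)⁻¹) := by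
  obtain ⟨M, hM⟩ := exists_iSup_specRad_le S
  exact isBoundedUnder_of ⟨M, hM⟩

theorem isCoboundedUnder_iSup_specRad {d K : ℕ} (S : Fin K → Matrix (Fin d) (Fin d) ℂ) :
    atTop.IsCoboundedUnder (· ≤ ·) fun n : ℕ =>
      ⨆ w : Fin n → Fin K, specRad (finWordProd S w) ^ ((n : ℝ)⁻¹) :=
  IsBoundedUnder.isCoboundedUnder_le (isBoundedUnder_of ⟨0, iSup_specRad_nonneg S⟩)

theorem genSpecRad_nonneg {d K : ℕ} [NeZero d] (S : Fin K → Matrix (Fin d) (Fin d) ℂ) :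
    0 ≤ genSpecRad S :=
  le_limsup_of_frequently_le (Frequently.of_forall (iSup_specRad_nonneg S))
    (isBoundedUnder_iSup_specRad S)

theorem genSpecRad_mono {d e K : ℕ} [NeZero e] {S : Fin K → Matrix (Fin d) (Fin d) ℂ}
    {T : Fin K → Matrix (Fin e) (Fin e) ℂ}
    (h : ∀ l : List (Fin K), spectrum ℂ (l.map S).prod ⊆ spectrum ℂ (l.map T).prod) :
    genSpecRad S ≤ genSpecRad T := by
  refine limsup_le_limsup (Eventually.of_forall fun n => ?_) (isCoboundedUnder_iSup_specRad S)
    (isBoundedUnder_iSup_specRad T)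
  refine ciSup_mono (Set.finite_range _).bddAbove fun w => ?_
  refine Real.rpow_le_rpow (specRad_nonneg _) (specRad_mono ?_) (by positivity)
  simpa only [finWordProd_eq_map_prod] using h _

theorem exists_specRad_le_pow {d K : ℕ} [NeZero d] (S : Fin K → Matrix (Fin d) (Fin d) ℂ)
    {r : ℝ} (hr : genSpecRad S < r) :
    ∃ C : ℝ, 0 ≤ C ∧ ∀ l : List (Fin K), specRad (l.map S).prod ≤ C * r ^ l.length := by
  have hr0 : 0 < r := (genSpecRad_nonneg S).trans_lt hr
  have hev := eventually_lt_of_limsup_lt hr (isBoundedUnder_iSup_specRad S)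
  obtain ⟨N, hN⟩ := eventually_atTop.1 hev
  obtain ⟨M, hM1, hM⟩ := exists_norm_bound S
  have hq : 1 ≤ max 1 (M / r) := le_max_left _ _
  refine ⟨max 1 (M / r) ^ (N + 1), by positivity, fun l => ?_⟩
  by_cases hl : N + 1 ≤ l.length
  · have h1 : specRad (l.map S).prod ^ ((l.length : ℝ)⁻¹) ≤ r := by
      refine le_trans ?_ (hN l.length (by omega)).le
      have := le_ciSup (f := fun w : Fin l.length → Fin K =>
        specRad (finWordProd S w) ^ ((l.length : ℝ)⁻¹)) (Set.finite_range _).bddAbove l.get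
      simpa [finWordProd_eq_map_prod, List.ofFn_get] using this
    have h2 := pow_le_pow_left₀ (Real.rpow_nonneg (specRad_nonneg _) _) h1 l.length
    rw [Real.rpow_inv_natCast_pow (specRad_nonneg _) (by omega)] at h2
    exact h2.trans (le_mul_of_one_le_left (by positivity) (one_le_pow₀ hq))
  · calc specRad (l.map S).prod ≤ M ^ l.length :=
          (specRad_le_norm _).trans (norm_map_prod_le hM hM1 l)
      _ = (M / r) ^ l.length * r ^ l.length := by rw [div_pow]; field_simp
      _ ≤ max 1 (M / r) ^ (N + 1) * r ^ l.length := by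
        gcongr ?_ * _
        calc (M / r) ^ l.length ≤ max 1 (M / r) ^ l.length := by
              gcongr; exact le_max_right _ _
          _ ≤ _ := pow_le_pow_right₀ hq (by omega)

theorem norm_le_sum_norm_entries {m n : ℕ} (A : Matrix (Fin m) (Fin n) ℂ) :
    ‖A‖ ≤ ∑ i, ∑ j, ‖A i j‖ := by
  rw [Matrix.linfty_opNorm_def]
  have : (Finset.univ.sup fun i => ∑ j, ‖A i j‖₊) ≤ ∑ i, ∑ j, ‖A i j‖₊ :=
    Finset.sup_le fun i _ => Finset.single_le_sum (f := fun i => ∑ j, ‖A i j‖₊)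
      (fun _ _ => zero_le) (Finset.mem_univ i)
  calc ((Finset.univ.sup fun i => ∑ j, ‖A i j‖₊ : NNReal) : ℝ)
      ≤ ((∑ i, ∑ j, ‖A i j‖₊ : NNReal) : ℝ) := by exact_mod_cast this
    _ = _ := by push_cast; rfl

/-- For an irreducible family, products grow at most like powers of any number exceeding the
generalized spectral radius (the Berger–Wang bound). -/
theorem exists_norm_map_prod_le_pow {m K : ℕ} [NeZero m] {F : Fin K → Matrix (Fin m) (Fin m) ℂ}
    (hF : IrreducibleFamily F) {r : ℝ} (hr : genSpecRad F < r) :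
    ∃ C : ℝ, 0 ≤ C ∧ ∀ l : List (Fin K), ‖(l.map F).prod‖ ≤ C * r ^ l.length := by
  have hr0 : 0 < r := (genSpecRad_nonneg F).trans_lt hr
  obtain ⟨C₀, hC₀, hspec⟩ := exists_specRad_le_pow F hr
  have key : ∀ X : Matrix (Fin m) (Fin m) ℂ, ∃ C : ℝ, ∀ l : List (Fin K),
      ‖((l.map F).prod * X).trace‖ ≤ C * r ^ l.length := by
    intro X
    have hX : X ∈ Submodule.span ℂ (Set.range fun l : List (Fin K) => (l.map F).prod) := by
      rw [span_words_eq_top (NeZero.one_le) hF]; trivial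
    induction hX using Submodule.span_induction with
    | mem X hX =>
      obtain ⟨b, rfl⟩ := hX
      refine ⟨m * (C₀ * r ^ b.length), fun l => ?_⟩
      have := (norm_trace_le ((l ++ b).map F).prod).trans
        (mul_le_mul_of_nonneg_left (hspec (l ++ b)) (by positivity))
      rw [List.map_append, List.prod_append, List.length_append, pow_add] at this
      refine this.trans (le_of_eq (by ring))
    | zero => exact ⟨0, fun l => by simp⟩
    | add X Y _ _ hX hY =>
      obtain ⟨C₁, h₁⟩ := hX
      obtain ⟨C₂, h₂⟩ := hY
      refine ⟨C₁ + C₂, fun l => ?_⟩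
      rw [mul_add, Matrix.trace_add, add_mul]
      exact (norm_add_le _ _).trans (add_le_add (h₁ l) (h₂ l))
    | smul c X _ hX =>
      obtain ⟨C₁, h₁⟩ := hX
      refine ⟨‖c‖ * C₁, fun l => ?_⟩
      rw [Matrix.mul_smul, Matrix.trace_smul, norm_smul, mul_assoc]
      exact mul_le_mul_of_nonneg_left (h₁ l) (norm_nonneg _)
  choose C hC using key
  have hent : ∀ (l : List (Fin K)) (i j : Fin m),
      ‖(l.map F).prod i j‖ ≤ C (Matrix.single j i 1) * r ^ l.length := by
    intro l i j
    simpa [Matrix.trace_mul_single] using hC (Matrix.single j i 1) l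
  refine ⟨∑ i, ∑ j, C (Matrix.single j i 1), ?_, fun l => ?_⟩
  · refine Finset.sum_nonneg fun i _ => Finset.sum_nonneg fun j _ => ?_
    simpa using (norm_nonneg _).trans (hent [] i j)
  · refine (norm_le_sum_norm_entries _).trans ?_
    simp only [Finset.sum_mul]
    gcongr
    exact hent _ _ _

theorem exists_blockTriangular_basis {d K : ℕ} (S : Fin K → Matrix (Fin d) (Fin d) ℂ) :
    ∃ (r : ℕ) (n : Fin r → ℕ) (B : Module.Basis ((j : Fin r) × Fin (n j)) ℂ (Fin d → ℂ)),
      (∀ j, 1 ≤ n j) ∧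
      (∀ k x y, x.1 < y.1 → B.repr (S k *ᵥ B y) x = 0) ∧
      ∀ j, IrreducibleFamily fun k =>
        Matrix.of fun a b => B.repr (S k *ᵥ B ⟨j, b⟩) ⟨j, a⟩ := by
  classical
  let X := {W : Submodule ℂ (Fin d → ℂ) // ∀ k, ∀ x ∈ W, S k *ᵥ x ∈ W}
  let val : X ↪o Submodule ℂ (Fin d → ℂ) := OrderEmbedding.subtype _
  have : WellFoundedLT X := ⟨val.ltEmbedding.isWellFounded.wf⟩
  have : WellFoundedGT X := ⟨val.dual.ltEmbedding.isWellFounded.wf⟩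
  let bot : X := ⟨⊥, fun k x hx => by rw [(Submodule.mem_bot ℂ).1 hx]; simp⟩
  let top : X := ⟨⊤, fun _ _ _ => trivial⟩
  obtain ⟨a, ha0, r, har, hcov⟩ :=
    exists_covBy_seq_of_wellFoundedLT_wellFoundedGT_of_le (x := bot) (y := top)
      (fun x _ => trivial)
  let s : ℕ → Submodule ℂ (Fin d → ℂ) := fun j => (a (r - j)).1
  have hs0 : s 0 = ⊤ := by simp [s, har, top]
  have hsr : s r = ⊥ := by simp [s, ha0, bot]
  have hscov : ∀ j < r, a (r - (j + 1)) ⋖ a (r - j) := fun j hj => by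
    have := hcov (r - (j + 1)) (by omega)
    rwa [show r - (j + 1) + 1 = r - j by omega] at this
  have hslt : ∀ j < r, s (j + 1) < s j := fun j hj => (hscov j hj).1
  have hsinv : ∀ j k, ∀ x ∈ s j, S k *ᵥ x ∈ s j := fun j => (a (r - j)).2
  have hcompl : ∀ j, ∃ U : Submodule ℂ (Fin d → ℂ), j < r →
      U ⊓ s (j + 1) = ⊥ ∧ U ⊔ s (j + 1) = s j := by
    intro j
    obtain ⟨C, hC⟩ := Submodule.exists_isCompl (s (j + 1))
    refine ⟨C ⊓ s j, fun hj => ⟨?_, ?_⟩⟩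
    · rw [inf_assoc, inf_eq_right.2 (hslt j hj).le, inf_comm, hC.inf_eq_bot]
    · rw [sup_comm, ← sup_inf_assoc_of_le C (hslt j hj).le, hC.sup_eq_top, top_inf_eq]
  choose U hU using hcompl
  let n : Fin r → ℕ := fun j => Module.finrank ℂ (U j)
  let v : ((j : Fin r) × Fin (n j)) → (Fin d → ℂ) := fun x => Module.finBasis ℂ (U x.1) x.2
  have hfin : ∀ j < r, Module.finrank ℂ (U j) + Module.finrank ℂ (s (j + 1)) =
      Module.finrank ℂ (s j) := fun j hj => by
    have := Submodule.finrank_sup_add_finrank_inf_eq (U j) (s (j + 1))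
    rw [(hU j hj).1, (hU j hj).2, finrank_bot] at this
    omega
  have hvmem : ∀ x, v x ∈ s x.1 := fun x => by
    rw [← (hU x.1 x.1.2).2]
    exact Submodule.mem_sup_left (Module.finBasis ℂ (U x.1) x.2).2
  have hspan : ∀ m ≤ r, s (r - m) ≤ Submodule.span ℂ (v '' {x | r - m ≤ x.1}) := by
    intro m
    induction m with
    | zero => intro _; simp [hsr]
    | succ m ih =>
      intro hm
      have hj : r - (m + 1) < r := by omega
      rw [← (hU _ hj).2, show r - (m + 1) + 1 = r - m by omega]
      refine sup_le ?_ ((ih (by omega)).trans (Submodule.span_mono (Set.image_mono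
        fun x (hx : r - m ≤ x.1) => show r - (m + 1) ≤ x.1 by omega)))
      intro u hu
      have h1 := (Module.finBasis ℂ (U (r - (m + 1)))).sum_repr ⟨u, hu⟩
      have h2 := congrArg Subtype.val h1
      simp only [Submodule.coe_sum, Submodule.coe_smul] at h2
      rw [← h2]
      refine Submodule.sum_mem _ fun b _ => Submodule.smul_mem _ _ (Submodule.subset_span ?_)
      exact ⟨⟨⟨r - (m + 1), hj⟩, b⟩, show r - (m + 1) ≤ r - (m + 1) from le_rfl, rfl⟩
  have hspan' : ∀ j ≤ r, s j ≤ Submodule.span ℂ (v '' {x | j ≤ x.1}) := by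
    intro j hj
    have := hspan (r - j) (by omega)
    rwa [show r - (r - j) = j by omega] at this
  have htop : ⊤ ≤ Submodule.span ℂ (Set.range v) := by
    rw [← hs0]
    exact (hspan' 0 (by omega)).trans (Submodule.span_mono (Set.image_subset_range _ _))
  have hcard : Fintype.card ((j : Fin r) × Fin (n j)) = Module.finrank ℂ (Fin d → ℂ) := by
    have hsum : ∀ m ≤ r, ∑ j ∈ Finset.range m, Module.finrank ℂ (U j) +
        Module.finrank ℂ (s m) = Module.finrank ℂ (Fin d → ℂ) := by
      intro m
      induction m with
      | zero => intro _; rw [hs0]; simp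
      | succ m ih =>
        intro hm
        rw [Finset.sum_range_succ, ← ih (by omega), ← hfin m (by omega)]
        ring
    have := hsum r le_rfl
    rw [hsr, finrank_bot, add_zero] at this
    rw [← this, Finset.sum_range]
    simp [n]
  let B := basisOfTopLeSpanOfCardEqFinrank v htop hcard
  have hB : ∀ x, B x = v x := fun x => by simp [B]
  have hBv : ⇑B = v := funext hB
  have hrepr : ∀ j ≤ r, ∀ u ∈ s j, ∀ x, (x.1 : ℕ) < j → B.repr u x = 0 := by
    intro j hj u hu x hx
    have := hspan' j hj hu
    rw [← hBv, Module.Basis.mem_span_image] at this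
    by_contra h
    have := this (Finsupp.mem_support_iff.2 h)
    simp only [Set.mem_ofPred_eq] at this
    omega
  have htri : ∀ k x y, x.1 < y.1 → B.repr (S k *ᵥ B y) x = 0 := fun k x y hxy =>
    hrepr y.1 y.1.2.le _ (hsinv _ k _ (by rw [hB]; exact hvmem y)) x hxy
  refine ⟨r, n, B, fun j => ?_, htri, fun j W hW => ?_⟩
  · have := Submodule.finrank_lt_finrank_of_lt (hslt j j.2)
    have := hfin j j.2
    simp only [n]
    omega
  · let π : (Fin d → ℂ) →ₗ[ℂ] (Fin (n j) → ℂ) :=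
      LinearMap.pi fun a => B.coord ⟨j, a⟩
    have hπ : ∀ u a, π u a = B.repr u ⟨j, a⟩ := fun u a => rfl
    have hπS : ∀ k, ∀ u ∈ s j, π (S k *ᵥ u) =
        (Matrix.of fun a b => B.repr (S k *ᵥ B ⟨j, b⟩) ⟨j, a⟩) *ᵥ π u := by
      intro k u hu
      funext a
      rw [hπ]
      conv_lhs => rw [← B.sum_repr u]
      simp only [Matrix.mulVec_sum, Matrix.mulVec_smul, map_sum, map_smul,
        Finsupp.coe_finsetSum, Finset.sum_apply, Finsupp.smul_apply, smul_eq_mul]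
      rw [Fintype.sum_sigma, Finset.sum_eq_single j]
      · simp [Matrix.mulVec, dotProduct, hπ, mul_comm]
      · intro i _ hij
        refine Finset.sum_eq_zero fun b _ => ?_
        rcases lt_or_gt_of_ne hij with h | h
        · rw [hrepr j j.2.le u hu ⟨i, b⟩ h, zero_mul]
        · rw [htri k ⟨j, a⟩ ⟨i, b⟩ h, mul_zero]
      · simp
    let W' : X := ⟨s j ⊓ W.comap π, fun k x hx => ⟨hsinv j k x hx.1, by
      have := hW k _ hx.2
      rw [← hπS k x hx.1] at this
      exact this⟩⟩
    have hπ0 : ∀ u ∈ s (j + 1), π u = 0 := fun u hu => by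
      funext a
      exact hrepr (j + 1) j.2 u hu ⟨j, a⟩ (Nat.lt_succ_self _)
    have h1 : a (r - (j + 1)) ≤ W' := fun u hu => ⟨(hslt j j.2).le hu, by
      change π u ∈ W
      rw [hπ0 u hu]; exact W.zero_mem⟩
    have h2 : W' ≤ a (r - j) := fun u hu => hu.1
    have hsec : ∀ w : Fin (n j) → ℂ, ∃ u ∈ s j, π u = w := by
      intro w
      refine ⟨∑ b, w b • B ⟨j, b⟩, Submodule.sum_mem _ fun b _ => Submodule.smul_mem _ _
        (by rw [hB]; exact hvmem ⟨j, b⟩), ?_⟩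
      funext a
      rw [hπ]
      simp [Finsupp.single_apply]
    rcases (hscov j j.2).eq_or_eq h1 h2 with h | h
    · left
      rw [eq_bot_iff]
      intro w hw
      obtain ⟨u, hu, rfl⟩ := hsec w
      have : u ∈ W'.1 := ⟨hu, hw⟩
      rw [h] at this
      exact (Submodule.mem_bot ℂ).2 (hπ0 u this)
    · right
      rw [eq_top_iff]
      intro w _
      obtain ⟨u, hu, rfl⟩ := hsec w
      have : u ∈ W'.1 := by rw [h]; exact hu
      exact this.2

theorem finSigmaFinEquiv_lt {m : ℕ} {n : Fin m → ℕ} {j j' : Fin m} (h : j < j')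
    (a : Fin (n j)) (b : Fin (n j')) :
    (finSigmaFinEquiv ⟨j, a⟩ : ℕ) < finSigmaFinEquiv ⟨j', b⟩ := by
  let f : ℕ → ℕ := fun i => if h : i < m then n ⟨i, h⟩ else 0
  have hval : ∀ (i : Fin m) (c : Fin (n i)), (finSigmaFinEquiv ⟨i, c⟩ : ℕ) =
      ∑ t ∈ Finset.range i, f t + c := by
    intro i c
    rw [finSigmaFinEquiv_apply, Finset.sum_range]
    congr 1
    refine Finset.sum_congr rfl fun t _ => ?_
    have : (t : ℕ) < m := t.2.trans i.2
    simp only [f, this, dif_pos]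
    rfl
  rw [hval, hval]
  have h1 : ∑ t ∈ Finset.range (j + 1), f t ≤ ∑ t ∈ Finset.range j', f t :=
    Finset.sum_le_sum_of_subset (Finset.range_mono h)
  rw [Finset.sum_range_succ] at h1
  have h2 : f j = n j := by simp [f]
  have := a.2
  omega

theorem exists_conj_blockTriangular {d K : ℕ} (hd : 1 ≤ d)
    (S : Fin K → Matrix (Fin d) (Fin d) ℂ) :
    ∃ (P : Matrix (Fin d) (Fin d) ℂ), IsUnit P ∧
    ∃ (r : ℕ), 1 ≤ r ∧ r ≤ d ∧
    ∃ (sizes : Fin r → ℕ) (emb : (j : Fin r) → Fin (sizes j) → Fin d),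
      (∀ j, 1 ≤ sizes j) ∧
      (∑ j, sizes j) = d ∧
      (∀ j, StrictMono (emb j)) ∧
      (∀ j j' : Fin r, j < j' → ∀ a b, emb j a < emb j' b) ∧
      (∀ i : Fin d, ∃ j a, emb j a = i) ∧
      (∀ k, ∀ j j' : Fin r, j < j' →
        ∀ a b, (P⁻¹ * S k * P) (emb j a) (emb j' b) = 0) ∧
      (∀ j, IrreducibleFamily fun k => (P⁻¹ * S k * P).submatrix (emb j) (emb j)) := by
  obtain ⟨r, n, B, hn, htri, hirr⟩ := exists_blockTriangular_basis S
  have hsum : ∑ j, n j = d := by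
    have := Module.finrank_eq_card_basis B
    simpa using this.symm
  let e : ((j : Fin r) × Fin (n j)) ≃ Fin d := finSigmaFinEquiv.trans (finCongr hsum)
  have he : ∀ x, ((e x : Fin d) : ℕ) = finSigmaFinEquiv x := fun x => rfl
  let P : Matrix (Fin d) (Fin d) ℂ := Matrix.of fun a b => B (e.symm b) a
  have hPB : ∀ u : Fin d → ℂ, P *ᵥ (fun i => B.repr u (e.symm i)) = u := by
    intro u
    conv_rhs => rw [← B.sum_repr u]
    funext i
    simp only [Matrix.mulVec, dotProduct, P, Matrix.of_apply, Finset.sum_apply, Pi.smul_apply,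
      smul_eq_mul]
    rw [← e.sum_comp]
    simp [mul_comm]
  have hPunit : IsUnit P := by
    rw [← Matrix.mulVec_surjective_iff_isUnit]
    exact fun u => ⟨_, hPB u⟩
  have hentry : ∀ k x y, (P⁻¹ * S k * P) (e x) (e y) = B.repr (S k *ᵥ B y) x := by
    intro k x y
    have hcol : (fun i => P i (e y)) = B y := by funext i; simp [P]
    have h1 : (P⁻¹ * S k * P) (e x) (e y) = (P⁻¹ *ᵥ (S k *ᵥ B y)) (e x) := by
      rw [Matrix.mulVec_mulVec, ← hcol]; rfl
    have hdet := (Matrix.isUnit_iff_isUnit_det P).1 hPunit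
    rw [h1]
    conv_lhs => rw [← hPB (S k *ᵥ B y), Matrix.mulVec_mulVec, Matrix.nonsing_inv_mul P hdet,
      Matrix.one_mulVec]
    simp
  have hr : 1 ≤ r := by
    by_contra h
    obtain rfl : r = 0 := by omega
    simp at hsum
    omega
  refine ⟨P, hPunit, r, hr, ?_, n, fun j a => e ⟨j, a⟩, hn, hsum, ?_, ?_, ?_, ?_, ?_⟩
  · calc r = ∑ _j : Fin r, 1 := by simp
      _ ≤ ∑ j, n j := Finset.sum_le_sum fun j _ => hn j
      _ = d := hsum
  · intro j a b hab
    rw [Fin.lt_def, he, he, finSigmaFinEquiv_apply, finSigmaFinEquiv_apply]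
    have : (a : ℕ) < b := hab
    simpa using this
  · intro j j' h a b
    rw [Fin.lt_def, he, he]
    exact finSigmaFinEquiv_lt h a b
  · intro i
    exact ⟨(e.symm i).1, (e.symm i).2, by simp⟩
  · intro k j j' h a b
    rw [hentry]
    exact htri k _ _ h
  · intro j
    have : (fun k => (P⁻¹ * S k * P).submatrix (fun a => e ⟨j, a⟩) (fun a => e ⟨j, a⟩)) =
        fun k => Matrix.of fun a b => B.repr (S k *ᵥ B ⟨j, b⟩) ⟨j, a⟩ := by
      funext k
      ext a b
      simp [hentry]
    rw [this]
    exact hirr j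

theorem exists_sigma_equiv {d r : ℕ} {n : Fin r → ℕ} {emb : (j : Fin r) → Fin (n j) → Fin d}
    (hmono : ∀ j, StrictMono (emb j)) (hlt : ∀ j j' : Fin r, j < j' → ∀ a b, emb j a < emb j' b)
    (hsurj : ∀ i : Fin d, ∃ j a, emb j a = i) :
    ∃ e : ((j : Fin r) × Fin (n j)) ≃ Fin d, emb = fun j a => e ⟨j, a⟩ := by
  refine ⟨Equiv.ofBijective (fun x => emb x.1 x.2) ⟨?_, ?_⟩, rfl⟩
  · rintro ⟨j, a⟩ ⟨j', b⟩ h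
    rcases lt_trichotomy j j' with hj | rfl | hj
    · exact absurd h (hlt _ _ hj _ _).ne
    · obtain rfl : a = b := (hmono j).injective h
      rfl
    · exact absurd h (hlt _ _ hj _ _).ne'
  · intro i
    obtain ⟨j, a, h⟩ := hsurj i
    exact ⟨⟨j, a⟩, h⟩

section Blocks

variable {d r : ℕ} {n : Fin r → ℕ}

/-- The block diagonal matrix with given blocks, laid out along `e`. -/
def blockDiag (e : ((j : Fin r) × Fin (n j)) ≃ Fin d) :
    ((j : Fin r) → Matrix (Fin (n j)) (Fin (n j)) ℂ) →+* Matrix (Fin d) (Fin d) ℂ :=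
  ((Matrix.reindexAlgEquiv ℂ ℂ e : _ ≃ₐ[ℂ] _) : _ →+* _).comp
    (Matrix.blockDiagonal'RingHom (fun j => Fin (n j)) ℂ)

theorem blockDiag_apply (e : ((j : Fin r) × Fin (n j)) ≃ Fin d)
    (M : (j : Fin r) → Matrix (Fin (n j)) (Fin (n j)) ℂ) (x y : (j : Fin r) × Fin (n j)) :
    blockDiag e M (e x) (e y) = Matrix.blockDiagonal' M x y := by
  simp [blockDiag]

theorem norm_entry_le {p q : ℕ} (A : Matrix (Fin p) (Fin q) ℂ) (i : Fin p) (j : Fin q) :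
    ‖A i j‖ ≤ ‖A‖ := by
  rw [Matrix.linfty_opNorm_def]
  have h : ‖A i j‖₊ ≤ Finset.univ.sup fun i => ∑ j, ‖A i j‖₊ :=
    (Finset.single_le_sum (f := fun j => ‖A i j‖₊) (fun _ _ => zero_le)
      (Finset.mem_univ j)).trans
      (Finset.le_sup (f := fun i => ∑ j, ‖A i j‖₊) (Finset.mem_univ i))
  exact_mod_cast h

theorem exists_norm_blockDiag_le (e : ((j : Fin r) × Fin (n j)) ≃ Fin d) :
    ∃ c : ℝ, 0 ≤ c ∧ ∀ (M : (j : Fin r) → Matrix (Fin (n j)) (Fin (n j)) ℂ) (b : ℝ),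
      0 ≤ b → (∀ j, ‖M j‖ ≤ b) → ‖blockDiag e M‖ ≤ c * b := by
  refine ⟨d * d, by positivity, fun M b hb hM => ?_⟩
  have hent : ∀ i i', ‖blockDiag e M i i'‖ ≤ b := by
    intro i i'
    obtain ⟨⟨j, a⟩, rfl⟩ := e.surjective i
    obtain ⟨⟨j', a'⟩, rfl⟩ := e.surjective i'
    rw [blockDiag_apply, Matrix.blockDiagonal'_apply]
    by_cases h : j = j'
    · subst h
      simpa using (norm_entry_le _ _ _).trans (hM j)
    · simpa [h] using hb
  refine (norm_le_sum_norm_entries _).trans ?_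
  calc ∑ i, ∑ i', ‖blockDiag e M i i'‖ ≤ ∑ _i : Fin d, ∑ _i' : Fin d, b := by
        gcongr; exact hent _ _
    _ = d * d * b := by simp [mul_assoc]

theorem submatrix_mul_of_lowerTriangular (e : ((j : Fin r) × Fin (n j)) ≃ Fin d)
    {A B : Matrix (Fin d) (Fin d) ℂ} (hA : ∀ x y, x.1 < y.1 → A (e x) (e y) = 0)
    (hB : ∀ x y, x.1 < y.1 → B (e x) (e y) = 0) (j : Fin r) :
    (A * B).submatrix (fun a => e ⟨j, a⟩) (fun a => e ⟨j, a⟩) =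
      A.submatrix (fun a => e ⟨j, a⟩) (fun a => e ⟨j, a⟩) *
        B.submatrix (fun a => e ⟨j, a⟩) (fun a => e ⟨j, a⟩) := by
  ext a b
  simp only [Matrix.submatrix_apply, Matrix.mul_apply]
  rw [← e.sum_comp, Fintype.sum_sigma, Finset.sum_eq_single j]
  · intro i _ hij
    refine Finset.sum_eq_zero fun c _ => ?_
    rcases lt_or_gt_of_ne hij with h | h
    · rw [hB ⟨i, c⟩ ⟨j, b⟩ h, mul_zero]
    · rw [hA ⟨j, a⟩ ⟨i, c⟩ h, zero_mul]
  · simp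

theorem blockTriangular_iff_lowerTriangular (e : ((j : Fin r) × Fin (n j)) ≃ Fin d)
    {A : Matrix (Fin d) (Fin d) ℂ} :
    A.BlockTriangular (fun i => OrderDual.toDual (e.symm i).1) ↔
      ∀ x y, x.1 < y.1 → A (e x) (e y) = 0 := by
  constructor
  · intro h x y hxy
    exact h (by simpa using hxy)
  · intro h i j hij
    simpa using h (e.symm i) (e.symm j) hij

theorem submatrix_one_block (e : ((j : Fin r) × Fin (n j)) ≃ Fin d) (j : Fin r) :
    (1 : Matrix (Fin d) (Fin d) ℂ).submatrix (fun a => e ⟨j, a⟩) (fun a => e ⟨j, a⟩) = 1 :=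
  Matrix.submatrix_one _ fun a b h => by simpa using h

theorem spectrum_block_subset (e : ((j : Fin r) × Fin (n j)) ≃ Fin d)
    {A : Matrix (Fin d) (Fin d) ℂ} (hA : ∀ x y, x.1 < y.1 → A (e x) (e y) = 0) (j : Fin r) :
    spectrum ℂ (A.submatrix (fun a => e ⟨j, a⟩) (fun a => e ⟨j, a⟩)) ⊆ spectrum ℂ A := by
  intro z
  contrapose!
  intro hz
  rw [spectrum.notMem_iff] at hz ⊢
  set X := algebraMap ℂ (Matrix (Fin d) (Fin d) ℂ) z - A with hX
  have hXtri : ∀ x y, x.1 < y.1 → X (e x) (e y) = 0 := by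
    intro x y hxy
    have hne : e x ≠ e y := fun h => hxy.ne (congrArg Sigma.fst (e.injective h))
    simp [hX, hA x y hxy, Matrix.algebraMap_matrix_apply, hne]
  have hdet := (Matrix.isUnit_iff_isUnit_det X).1 hz
  have : Invertible X := hz.invertible
  have hinv : ∀ x y, x.1 < y.1 → X⁻¹ (e x) (e y) = 0 :=
    (blockTriangular_iff_lowerTriangular e).1
      (Matrix.blockTriangular_inv_of_blockTriangular
        ((blockTriangular_iff_lowerTriangular e).2 hXtri))
  have hsub : X.submatrix (fun a => e ⟨j, a⟩) (fun a => e ⟨j, a⟩) =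
      algebraMap ℂ (Matrix (Fin (n j)) (Fin (n j)) ℂ) z -
        A.submatrix (fun a => e ⟨j, a⟩) (fun a => e ⟨j, a⟩) := by
    ext a b
    simp [hX, Matrix.algebraMap_matrix_apply]
  have h1 := submatrix_mul_of_lowerTriangular e hXtri hinv j
  rw [Matrix.mul_nonsing_inv X hdet, submatrix_one_block, hsub] at h1
  exact .of_mul_eq_one _ h1.symm

theorem map_prod_lowerTriangular {K : ℕ} (e : ((j : Fin r) × Fin (n j)) ≃ Fin d)
    {T : Fin K → Matrix (Fin d) (Fin d) ℂ} (hT : ∀ k x y, x.1 < y.1 → T k (e x) (e y) = 0)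
    (l : List (Fin K)) :
    (∀ x y, x.1 < y.1 → (l.map T).prod (e x) (e y) = 0) ∧
    ∀ j, (l.map T).prod.submatrix (fun a => e ⟨j, a⟩) (fun a => e ⟨j, a⟩) =
      (l.map fun k => (T k).submatrix (fun a => e ⟨j, a⟩) (fun a => e ⟨j, a⟩)).prod := by
  induction l with
  | nil =>
    refine ⟨fun x y hxy => ?_, fun j => by simpa using submatrix_one_block e j⟩
    have hne : e x ≠ e y := fun h => hxy.ne (congrArg Sigma.fst (e.injective h))
    simp [hne]
  | cons k l ih =>
    simp only [List.map_cons, List.prod_cons]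
    refine ⟨?_, fun j => ?_⟩
    · rw [← blockTriangular_iff_lowerTriangular] at *
      exact ((blockTriangular_iff_lowerTriangular e).2 (hT k)).mul ih.1
    · rw [submatrix_mul_of_lowerTriangular e (hT k) ih.1, ih.2]

theorem genSpecRad_block_le {K : ℕ} [NeZero d] (e : ((j : Fin r) × Fin (n j)) ≃ Fin d)
    {T : Fin K → Matrix (Fin d) (Fin d) ℂ} (hT : ∀ k x y, x.1 < y.1 → T k (e x) (e y) = 0)
    (j : Fin r) :
    genSpecRad (fun k => (T k).submatrix (fun a => e ⟨j, a⟩) (fun a => e ⟨j, a⟩)) ≤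
      genSpecRad T := by
  refine genSpecRad_mono fun l => ?_
  obtain ⟨h1, h2⟩ := map_prod_lowerTriangular e hT l
  rw [← h2 j]
  exact spectrum_block_subset e h1 j

/-- A lower triangular family is conjugate to arbitrarily small perturbations of its block
diagonal part. -/
theorem exists_conj_near_blockDiag {K : ℕ} (e : ((j : Fin r) × Fin (n j)) ≃ Fin d)
    {T : Fin K → Matrix (Fin d) (Fin d) ℂ} (hT : ∀ k x y, x.1 < y.1 → T k (e x) (e y) = 0)
    {ε : ℝ} (hε : 0 < ε) :
    ∃ Q : (Matrix (Fin d) (Fin d) ℂ)ˣ, ∀ k,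
      ‖(Q : Matrix (Fin d) (Fin d) ℂ) * T k * (Q⁻¹ : (Matrix (Fin d) (Fin d) ℂ)ˣ) -
        blockDiag e (fun j => (T k).submatrix (fun a => e ⟨j, a⟩) (fun a => e ⟨j, a⟩))‖ ≤ ε := by
  obtain ⟨M, hM1, hM⟩ := exists_norm_bound fun k => ∑ a, ∑ b, ‖T k a b‖
  let δ : ℝ := min 1 (ε / M)
  have hδ0 : 0 < δ := lt_min one_pos (by positivity)
  have hδ1 : δ ≤ 1 := min_le_left _ _
  have hδM : δ * M ≤ ε := by
    calc δ * M ≤ ε / M * M := by gcongr; exact min_le_right _ _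
      _ = ε := by field_simp
  let u : Fin d → ℂ := fun i => (δ : ℂ) ^ ((e.symm i).1 : ℕ)
  have hu : ∀ i, u i ≠ 0 := fun i => pow_ne_zero _ (by exact_mod_cast hδ0.ne')
  let Q : (Matrix (Fin d) (Fin d) ℂ)ˣ :=
    ⟨Matrix.diagonal u, Matrix.diagonal fun i => (u i)⁻¹,
      by rw [Matrix.diagonal_mul_diagonal, ← Matrix.diagonal_one]; congr; funext i; simp [hu],
      by rw [Matrix.diagonal_mul_diagonal, ← Matrix.diagonal_one]; congr; funext i; simp [hu]⟩
  refine ⟨Q, fun k => ?_⟩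
  have hent : ∀ i i', ‖((Q : Matrix (Fin d) (Fin d) ℂ) * T k *
      (Q⁻¹ : (Matrix (Fin d) (Fin d) ℂ)ˣ) - blockDiag e (fun j =>
        (T k).submatrix (fun a => e ⟨j, a⟩) (fun a => e ⟨j, a⟩))) i i'‖ ≤ δ * ‖T k i i'‖ := by
    intro i i'
    obtain ⟨⟨j, a⟩, rfl⟩ := e.surjective i
    obtain ⟨⟨j', b⟩, rfl⟩ := e.surjective i'
    have h1 : ((Q : Matrix (Fin d) (Fin d) ℂ) * T k * (Q⁻¹ : (Matrix (Fin d) (Fin d) ℂ)ˣ))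
        (e ⟨j, a⟩) (e ⟨j', b⟩) =
        (δ : ℂ) ^ (j : ℕ) * T k (e ⟨j, a⟩) (e ⟨j', b⟩) * ((δ : ℂ) ^ (j' : ℕ))⁻¹ := by
      change (Matrix.diagonal u * T k * Matrix.diagonal fun i => (u i)⁻¹) _ _ = _
      rw [Matrix.mul_diagonal, Matrix.diagonal_mul]
      simp [u]
    rw [Matrix.sub_apply, h1, blockDiag_apply, Matrix.blockDiagonal'_apply]
    have hδC : (δ : ℂ) ≠ 0 := by exact_mod_cast hδ0.ne'
    rcases lt_trichotomy j j' with hj | rfl | hj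
    · rw [hT k ⟨j, a⟩ ⟨j', b⟩ hj]
      simp [hj.ne]
    · have : (δ : ℂ) ^ (j : ℕ) * T k (e ⟨j, a⟩) (e ⟨j, b⟩) * ((δ : ℂ) ^ (j : ℕ))⁻¹ =
          T k (e ⟨j, a⟩) (e ⟨j, b⟩) := by field_simp
      rw [this]
      simp only [dif_pos, Matrix.submatrix_apply, cast_eq, sub_self, norm_zero]
      positivity
    · obtain ⟨c, hc⟩ : ∃ c : ℕ, (j : ℕ) = j' + 1 + c := ⟨j - j' - 1, by
        have : (j' : ℕ) < j := hj
        omega⟩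
      have : (δ : ℂ) ^ (j : ℕ) * T k (e ⟨j, a⟩) (e ⟨j', b⟩) * ((δ : ℂ) ^ (j' : ℕ))⁻¹ =
          (δ : ℂ) ^ (1 + c) * T k (e ⟨j, a⟩) (e ⟨j', b⟩) := by
        rw [hc, add_assoc, pow_add]; field_simp
      rw [this]
      simp only [hj.ne', dif_neg, not_false_eq_true, sub_zero, norm_mul, norm_pow,
        Complex.norm_real, Real.norm_of_nonneg hδ0.le]
      gcongr
      rw [pow_add, pow_one]
      exact mul_le_of_le_one_right hδ0.le (pow_le_one₀ hδ0.le hδ1)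
  refine (norm_le_sum_norm_entries _).trans ?_
  calc _ ≤ ∑ a, ∑ b, δ * ‖T k a b‖ := by gcongr; exact hent _ _
    _ = δ * ∑ a, ∑ b, ‖T k a b‖ := by simp only [Finset.mul_sum]
    _ ≤ δ * M := by
      gcongr
      exact (le_abs_self _).trans (hM k)
    _ ≤ ε := hδM

end Blocks

theorem le_mul_prod_of_submultiplicative {f : ℕ → ℕ → ℝ} {C t : ℝ} {M : ℕ} {w : ℕ → ℝ}
    (ht : 0 < t) (htC : t ≤ C) (hf : ∀ p n, 0 ≤ f p n) (hf0 : ∀ p, f p 0 ≤ 1)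
    (hf1 : ∀ p, f p 1 ≤ C) (hadd : ∀ p m n, f p (m + n) ≤ f p m * f (p + m) n)
    (hw : ∀ p, w p = C ∨ w p = t ∧ ∃ n, 1 ≤ n ∧ n ≤ M ∧ f p n ≤ t ^ n) (p n : ℕ) :
    f p n ≤ (C / t) ^ M * ∏ i ∈ Finset.range n, w (p + i) := by
  have hC : 0 < C := ht.trans_le htC
  have hq : 1 ≤ C / t := (one_le_div ht).2 htC
  have hwt : ∀ p, t ≤ w p := fun p => by rcases hw p with h | h <;> simp [h, htC]
  have hw0 : ∀ p, 0 ≤ w p := fun p => ht.le.trans (hwt p)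
  have hpow : ∀ p n, t ^ n ≤ ∏ i ∈ Finset.range n, w (p + i) := fun p n => by
    simpa using Finset.prod_le_prod (s := Finset.range n) (f := fun _ => t)
      (g := fun i => w (p + i)) (fun _ _ => ht.le) fun i _ => hwt _
  have hcrude : ∀ n p, f p n ≤ C ^ n := by
    intro n
    induction n with
    | zero => intro p; simpa using hf0 p
    | succ n ih =>
      intro p
      rw [add_comm n 1, pow_add, pow_one]
      exact (hadd p 1 n).trans (mul_le_mul (hf1 p) (ih _) (hf _ _) hC.le)
  induction n using Nat.strong_induction_on generalizing p with
  | _ n ih =>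
    rcases Nat.eq_zero_or_pos n with rfl | hn
    · simpa using (hf0 p).trans (one_le_pow₀ hq)
    · rcases hw p with h | ⟨h, m, hm1, hmM, hm⟩
      · obtain ⟨n, rfl⟩ : ∃ k, n = 1 + k := ⟨n - 1, by omega⟩
        refine (hadd p 1 n).trans ?_
        rw [Finset.prod_range_add]
        calc f p 1 * f (p + 1) n
            ≤ C * ((C / t) ^ M * ∏ i ∈ Finset.range n, w (p + 1 + i)) :=
              mul_le_mul (hf1 p) (ih n (by omega) _) (hf _ _) hC.le
          _ = _ := by simp [h, add_assoc]; ring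
      · by_cases hmn : m ≤ n
        · obtain ⟨n, rfl⟩ : ∃ k, n = m + k := ⟨n - m, by omega⟩
          refine (hadd p m n).trans ?_
          rw [Finset.prod_range_add]
          calc f p m * f (p + m) n
              ≤ (∏ i ∈ Finset.range m, w (p + i)) *
                ((C / t) ^ M * ∏ i ∈ Finset.range n, w (p + m + i)) :=
                mul_le_mul (hm.trans (hpow p m)) (ih n (by omega) _) (hf _ _)
                  (Finset.prod_nonneg fun _ _ => hw0 _)
            _ = _ := by simp only [add_assoc]; ring
        · calc f p n ≤ C ^ n := hcrude n p
            _ = (C / t) ^ n * t ^ n := by rw [div_pow]; field_simp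
            _ ≤ _ := mul_le_mul (pow_le_pow_right₀ hq (by omega)) (hpow p n) (by positivity)
                (by positivity)

/-- Ordered products over a window stay controlled under a small relative perturbation. -/
theorem norm_window_prod_le {A : Type*} [SeminormedRing A] {D Y : ℕ → A} {w : ℕ → ℝ} {L e : ℝ}
    (hL : 0 ≤ L) (he : 0 ≤ e) (hw : ∀ p, 0 ≤ w p)
    (hD : ∀ p n, ‖((List.range' p n).map D).prod‖ ≤ L * ∏ i ∈ Finset.range n, w (p + i))
    (hY : ∀ p, ‖Y p - D p‖ ≤ e * w p) (p n : ℕ) :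
    ‖((List.range' p n).map Y).prod‖ ≤
      L * (1 + e * L) ^ n * ∏ i ∈ Finset.range n, w (p + i) := by
  have hprod : ∀ p n, 0 ≤ ∏ i ∈ Finset.range n, w (p + i) := fun p n =>
    Finset.prod_nonneg fun _ _ => hw _
  suffices h : ∀ n q m, ‖((List.range' q m).map D).prod * ((List.range' (q + m) n).map Y).prod‖ ≤
      L * (1 + e * L) ^ n * ∏ i ∈ Finset.range (m + n), w (q + i) by
    simpa using h n p 0
  intro n
  induction n with
  | zero => intro q m; simpa using hD q m
  | succ n ih =>
    intro q m
    have h1 : ((List.range' q m).map D).prod * ((List.range' (q + m) (n + 1)).map Y).prod =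
        ((List.range' q (m + 1)).map D).prod * ((List.range' (q + (m + 1)) n).map Y).prod +
        ((List.range' q m).map D).prod * (Y (q + m) - D (q + m)) *
          ((List.range' (q + m + 1) n).map Y).prod := by
      rw [List.range'_succ, ← List.range'_append_1 (s := q) (m := m) (n := 1)]
      simp only [List.map_cons, List.prod_cons, List.map_append, List.prod_append,
        List.range'_one, List.map_nil, List.prod_nil, mul_one, ← add_assoc]
      noncomm_ring
    rw [h1]
    have h2 := ih q (m + 1)
    have h3 := ih (q + m + 1) 0
    simp only [List.range'_zero, List.map_nil, List.prod_nil, one_mul, add_zero, zero_add] at h3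
    have h4 : ‖((List.range' q m).map D).prod * (Y (q + m) - D (q + m)) *
          ((List.range' (q + m + 1) n).map Y).prod‖ ≤
        (L * ∏ i ∈ Finset.range m, w (q + i)) * (e * w (q + m)) *
          (L * (1 + e * L) ^ n * ∏ i ∈ Finset.range n, w (q + m + 1 + i)) := by
      refine (norm_mul_le _ _).trans (mul_le_mul ((norm_mul_le _ _).trans
        (mul_le_mul (hD q m) (hY _) (norm_nonneg _) (mul_nonneg hL (hprod _ _)))) h3
        (norm_nonneg _) ?_)
      exact mul_nonneg (mul_nonneg hL (hprod _ _)) (mul_nonneg he (hw _))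
    have h5 : ∏ i ∈ Finset.range (m + (n + 1)), w (q + i) =
        (∏ i ∈ Finset.range m, w (q + i)) * (w (q + m) *
          ∏ i ∈ Finset.range n, w (q + m + 1 + i)) := by
      rw [Finset.prod_range_add, add_comm n 1, Finset.prod_range_add]
      simp [add_assoc]
    have h6 : m + 1 + n = m + (n + 1) := by ring
    rw [h6] at h2
    refine (norm_add_le _ _).trans ((add_le_add h2 h4).trans (le_of_eq ?_))
    rw [h5]
    ring

theorem shift_iterate_apply {K : ℕ} (x : ℕ → Fin K) (p n : ℕ) :
    (shift K)^[p] x n = x (p + n) := by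
  induction p generalizing x with
  | zero => simp
  | succ p ih => rw [Function.iterate_succ_apply, ih, shift]; congr 1; ring

theorem wordProd_shift_iterate {d K : ℕ} (S : Fin K → Matrix (Fin d) (Fin d) ℂ)
    (x : ℕ → Fin K) (p n : ℕ) :
    wordProd S ((shift K)^[p] x) n = ((List.range' p n).map fun q => S (x q)).prod := by
  unfold wordProd
  congr 1
  refine List.ext_getElem (by simp) fun i h1 h2 => ?_
  simp [shift_iterate_apply]

theorem wordProd_eq_map_prod {d K : ℕ} (S : Fin K → Matrix (Fin d) (Fin d) ℂ)
    (x : ℕ → Fin K) (n : ℕ) :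
    wordProd S x n = ((List.ofFn fun t : Fin n => x t).map S).prod := by
  simp [wordProd, List.map_ofFn, Function.comp_def]

theorem wordProd_add {d K : ℕ} (S : Fin K → Matrix (Fin d) (Fin d) ℂ)
    (x : ℕ → Fin K) (m n : ℕ) :
    wordProd S x (m + n) = wordProd S x m * wordProd S ((shift K)^[m] x) n := by
  have h := wordProd_shift_iterate S x 0
  simp only [Function.iterate_zero, id_eq] at h
  rw [h, h, wordProd_shift_iterate, ← List.range'_append_1]
  simp

theorem wordProd_one {d K : ℕ} (S : Fin K → Matrix (Fin d) (Fin d) ℂ) (x : ℕ → Fin K) :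
    wordProd S x 1 = S (x 0) := by
  simp [wordProd]

/-- If at every time either the weight is the trivial bound `C`, or it is `t` and every diagonal
block contracts at rate `t` along some window of bounded length, then the products of the whole
lower triangular family are controlled by the product of the weights, up to a small
exponential error. -/
theorem exists_norm_wordProd_le_prod {d r K : ℕ} {n : Fin r → ℕ}
    (e : ((j : Fin r) × Fin (n j)) ≃ Fin d)
    {T : Fin K → Matrix (Fin d) (Fin d) ℂ} (hT : ∀ k x y, x.1 < y.1 → T k (e x) (e y) = 0)
    {C t η : ℝ} (M : ℕ) (ht : 0 < t) (htC : t ≤ C) (hη : 0 < η)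
    (hC : ∀ j k, ‖(T k).submatrix (fun a => e ⟨j, a⟩) (fun a => e ⟨j, a⟩)‖ ≤ C) :
    ∃ C' : ℝ, 0 ≤ C' ∧ ∀ (x : ℕ → Fin K) (w : ℕ → ℝ),
      (∀ p, w p = C ∨ w p = t ∧ ∀ j, ∃ m, 1 ≤ m ∧ m ≤ M ∧
        ‖wordProd (fun k => (T k).submatrix (fun a => e ⟨j, a⟩) (fun a => e ⟨j, a⟩))
          ((shift K)^[p] x) m‖ ≤ t ^ m) →
      ∀ N, ‖wordProd T x N‖ ≤ C' * (1 + η) ^ N * ∏ p ∈ Finset.range N, w p := by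
  obtain ⟨c, hc0, hc⟩ := exists_norm_blockDiag_le e
  have hC0 : 0 < C := ht.trans_le htC
  set L : ℝ := c * (C / t) ^ M with hL
  have hL0 : 0 ≤ L := by positivity
  obtain ⟨Q, hQ⟩ := exists_conj_near_blockDiag e hT (ε := η / (L + 1) * t) (by positivity)
  set F : (j : Fin r) → Fin K → Matrix (Fin (n j)) (Fin (n j)) ℂ :=
    fun j k => (T k).submatrix (fun a => e ⟨j, a⟩) (fun a => e ⟨j, a⟩) with hF
  let q : Matrix (Fin d) (Fin d) ℂ := Q
  let q' : Matrix (Fin d) (Fin d) ℂ := (Q⁻¹ : (Matrix (Fin d) (Fin d) ℂ)ˣ)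
  have hqq' : q' * q = 1 := Q.inv_mul
  refine ⟨‖q'‖ * L * ‖q‖, by positivity, fun x w hw N => ?_⟩
  have hwt : ∀ p, t ≤ w p := fun p => by rcases hw p with h | h <;> simp [h, htC]
  have hw0 : ∀ p, 0 ≤ w p := fun p => ht.le.trans (hwt p)
  have hblock : ∀ j p m, ‖wordProd (F j) ((shift K)^[p] x) m‖ ≤
      (C / t) ^ M * ∏ i ∈ Finset.range m, w (p + i) := by
    intro j
    refine le_mul_prod_of_submultiplicative ht htC (fun _ _ => norm_nonneg _) (fun p => ?_)
      (fun p => ?_) (fun p m k => ?_) (fun p => ?_)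
    · simpa [wordProd] using norm_one_matrix_le (n j)
    · rw [wordProd_one]; exact hC j _
    · rw [wordProd_add, ← Function.iterate_add_apply, add_comm m p]
      exact norm_mul_le _ _
    · exact (hw p).imp_right fun h => ⟨h.1, h.2 j⟩
  have hD : ∀ p m, ‖((List.range' p m).map fun q => blockDiag e fun j => F j (x q)).prod‖ ≤
      L * ∏ i ∈ Finset.range m, w (p + i) := by
    intro p m
    have h1 : ((List.range' p m).map fun q => blockDiag e fun j => F j (x q)).prod =
        blockDiag e fun j => wordProd (F j) ((shift K)^[p] x) m := by
      rw [← Function.comp_def (blockDiag e) (fun q j => F j (x q)), ← List.map_map,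
        ← map_list_prod]
      congr 1
      funext j
      rw [Pi.list_prod_apply, List.map_map, wordProd_shift_iterate]
      rfl
    rw [h1, hL, mul_assoc]
    exact hc _ _ (mul_nonneg (by positivity) (Finset.prod_nonneg fun _ _ => hw0 _))
      fun j => hblock j p m
  have hY := norm_window_prod_le (Y := fun p => q * T (x p) * q') hL0
    (e := η / (L + 1)) (by positivity) hw0 hD
    (fun p => (hQ (x p)).trans (by gcongr; exact hwt p)) 0 N
  have hconj : ∀ l : List (Fin K),
      (l.map T).prod = q' * (l.map fun k => q * T k * q').prod * q := by
    intro l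
    induction l with
    | nil => simp [hqq']
    | cons k l ih =>
      have h2 : ∀ Z : Matrix (Fin d) (Fin d) ℂ,
          q' * (q * T k * q' * Z) * q = (q' * q) * T k * (q' * Z * q) := fun Z => by
        noncomm_ring
      rw [List.map_cons, List.prod_cons, ih, List.map_cons, List.prod_cons, h2, hqq', one_mul]
  have hη' : 1 + η / (L + 1) * L ≤ 1 + η := by
    have : η / (L + 1) * L ≤ η := by
      rw [div_mul_eq_mul_div, div_le_iff₀ (by positivity)]
      nlinarith
    linarith
  have hN : wordProd T x N = q' * ((List.range' 0 N).map fun p => q * T (x p) * q').prod * q := by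
    have h3 := wordProd_shift_iterate T x 0 N
    have h4 := hconj ((List.range' 0 N).map x)
    simp only [List.map_map, Function.comp_def] at h4
    rw [← h4, ← h3]
    rfl
  rw [hN]
  simp only [zero_add] at hY
  have hprod : 0 ≤ ∏ i ∈ Finset.range N, w i := Finset.prod_nonneg fun _ _ => hw0 _
  calc _ ≤ ‖q'‖ * (L * (1 + η / (L + 1) * L) ^ N * ∏ i ∈ Finset.range N, w i) * ‖q‖ :=
        (norm_mul_le _ _).trans (by
          gcongr
          exact (norm_mul_le _ _).trans (by gcongr))
    _ ≤ ‖q'‖ * (L * (1 + η) ^ N * ∏ i ∈ Finset.range N, w i) * ‖q‖ := by gcongr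
    _ = _ := by ring

open scoped Classical in
/-- For a measure preserving map, if the complement of `G` is small then with positive
probability the orbit visits it with small frequency infinitely often. -/
theorem frequently_card_orbit_compl_lt {Ω : Type*} [MeasurableSpace Ω] {μ : Measure Ω}
    [IsProbabilityMeasure μ] {f : Ω → Ω} (hf : MeasurePreserving f μ μ) {G : Set Ω}
    (hG : MeasurableSet G) {κ : ℝ} (hκ : 0 < κ) (hμ : μ Gᶜ ≤ ENNReal.ofReal (κ / 2)) :
    ∃ᶠ x in ae μ, ∃ᶠ N : ℕ in atTop,
      (((Finset.range N).filter fun p => f^[p] x ∉ G).card : ℝ) < κ * N := by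
  let b : ℕ → Ω → ℝ≥0∞ := fun N x => ∑ p ∈ Finset.range N, (f^[p] ⁻¹' Gᶜ).indicator 1 x
  have hbm : ∀ N, Measurable (b N) := fun N => Finset.measurable_sum _ fun p _ =>
    measurable_one.indicator ((hf.iterate p).measurable hG.compl)
  have hbcard : ∀ N x,
      b N x = (((Finset.range N).filter fun p => f^[p] x ∉ G).card : ℝ≥0∞) := by
    intro N x
    simp only [b, Set.indicator_apply, Finset.card_filter, Pi.one_apply, Set.mem_preimage,
      Set.mem_compl_iff]
    push_cast
    rfl
  have hint : ∀ N, ∫⁻ x, b N x ∂μ ≤ N * ENNReal.ofReal (κ / 2) := by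
    intro N
    rw [lintegral_finsetSum _ fun p _ =>
      measurable_one.indicator ((hf.iterate p).measurable hG.compl)]
    calc _ = ∑ p ∈ Finset.range N, μ Gᶜ := by
          refine Finset.sum_congr rfl fun p _ => ?_
          rw [lintegral_indicator_one ((hf.iterate p).measurable hG.compl),
            (hf.iterate p).measure_preimage hG.compl.nullMeasurableSet]
      _ ≤ _ := by
          rw [Finset.sum_const, Finset.card_range, nsmul_eq_mul]
          gcongr
  let E : ℕ → Set Ω := fun N => {x | ENNReal.ofReal (κ * N) ≤ b N x}
  have hE : ∀ N, MeasurableSet (E N) := fun N => measurableSet_le measurable_const (hbm N)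
  have hEle : ∀ N : ℕ, 0 < N → μ (E N) ≤ 1 / 2 := by
    intro N hN
    have hN' : (0 : ℝ) < N := by exact_mod_cast hN
    have h1 := (mul_meas_ge_le_lintegral (μ := μ) (hbm N) (ENNReal.ofReal (κ * N))).trans (hint N)
    have h2 : (N : ℝ≥0∞) * ENNReal.ofReal (κ / 2) = ENNReal.ofReal (κ * N) * (1 / 2) := by
      have : (1 / 2 : ℝ≥0∞) = ENNReal.ofReal (1 / 2) := by
        rw [ENNReal.ofReal_div_of_pos two_pos]; simp
      rw [this, ← ENNReal.ofReal_natCast, ← ENNReal.ofReal_mul (by positivity),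
        ← ENNReal.ofReal_mul (by positivity)]
      congr 1
      ring
    rw [h2] at h1
    exact (ENNReal.mul_le_mul_iff_right
      (by simpa using mul_pos hκ hN') ENNReal.ofReal_ne_top).1 h1
  intro hcon
  have hev : ∀ᵐ x ∂μ, ∀ᶠ N in atTop, x ∈ E N := by
    filter_upwards [hcon] with x hx
    filter_upwards [not_frequently.1 hx] with N hN
    change ENNReal.ofReal (κ * N) ≤ b N x
    rw [hbcard, ← ENNReal.ofReal_natCast]
    exact ENNReal.ofReal_le_ofReal (not_lt.1 hN)
  have hlim : Tendsto (fun N => μ (E N)) atTop (𝓝 (μ Set.univ)) := by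
    refine tendsto_measure_of_ae_tendsto_indicator_of_isFiniteMeasure (μ := μ) atTop
      MeasurableSet.univ hE ?_
    filter_upwards [hev] with x hx
    filter_upwards [hx] with N hN
    simpa using hN
  have h3 : μ Set.univ ≤ 1 / 2 :=
    le_of_tendsto hlim ((eventually_gt_atTop 0).mono fun N hN => hEle N hN)
  rw [measure_univ] at h3
  norm_num at h3

theorem eventually_mul_pow_lt_pow {a b : ℝ} (c : ℝ) (ha : 0 ≤ a) (hab : a < b) :
    ∀ᶠ n : ℕ in atTop, c * a ^ n < b ^ n := by
  have hb : 0 < b := ha.trans_lt hab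
  have h : Tendsto (fun n : ℕ => c * (a / b) ^ n) atTop (𝓝 (c * 0)) :=
    (tendsto_pow_atTop_nhds_zero_of_lt_one (by positivity) ((div_lt_one hb).2 hab)).const_mul c
  rw [mul_zero] at h
  filter_upwards [h.eventually_lt_const one_pos] with n hn
  rwa [div_pow, ← mul_div_assoc, div_lt_one (pow_pos hb n)] at hn

theorem tendsto_rpow_inv_of_growth {y : ℕ → ℝ} {ρ : ℝ} (hy : ∀ n, 0 ≤ y n) (hρ : 0 ≤ ρ)
    (hupper : ∀ r, ρ < r → ∃ C : ℝ, ∀ n, y n ≤ C * r ^ n)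
    (hlower : ∀ t, 0 < t → t < ρ → ∃ C : ℝ, ∀ᶠ n in atTop, t ^ n ≤ C * y n) :
    Tendsto (fun n : ℕ => y n ^ ((n : ℝ)⁻¹)) atTop (𝓝 ρ) := by
  have hpow : ∀ n : ℕ, 0 < n → (y n ^ ((n : ℝ)⁻¹)) ^ n = y n := fun n hn =>
    Real.rpow_inv_natCast_pow (hy n) hn.ne'
  have hnonneg : ∀ n : ℕ, 0 ≤ y n ^ ((n : ℝ)⁻¹) := fun n => Real.rpow_nonneg (hy n) _
  refine tendsto_order.2 ⟨fun a ha => ?_, fun b hb => ?_⟩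
  · rcases lt_or_ge a 0 with ha0 | ha0
    · exact Eventually.of_forall fun n => ha0.trans_le (hnonneg n)
    · obtain ⟨t, hat, htρ⟩ := exists_between ha
      obtain ⟨C, hC⟩ := hlower t (ha0.trans_lt hat) htρ
      filter_upwards [hC, eventually_mul_pow_lt_pow (max C 1) ha0 hat, eventually_gt_atTop 0]
        with n hn h2 hn0
      refine lt_of_pow_lt_pow_left₀ n (hnonneg n) ?_
      rw [hpow n hn0]
      have h3 : C * y n ≤ max C 1 * y n := mul_le_mul_of_nonneg_right (le_max_left _ _) (hy n)
      exact lt_of_mul_lt_mul_left (h2.trans_le (hn.trans h3)) (by positivity)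
  · obtain ⟨r, hρr, hrb⟩ := exists_between hb
    obtain ⟨C, hC⟩ := hupper r hρr
    filter_upwards [eventually_mul_pow_lt_pow C (hρ.trans hρr.le) hrb, eventually_gt_atTop 0]
      with n hn hn0
    refine lt_of_pow_lt_pow_left₀ n (hρ.trans hb.le) ?_
    rw [hpow n hn0]
    exact (hC n).trans_lt hn

namespace MatrixNorm

variable {d : ℕ} (ν : MatrixNorm d)

theorem sum_le {ι : Type*} (s : Finset ι) (f : ι → Matrix (Fin d) (Fin d) ℂ) :
    ν.N (∑ i ∈ s, f i) ≤ ∑ i ∈ s, ν.N (f i) :=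
  Finset.le_sum_of_subadditive ν.N ((ν.definite 0).2 rfl).le ν.triangle s f

theorem exists_le_mul_norm : ∃ c : ℝ, 0 ≤ c ∧ ∀ A, ν.N A ≤ c * ‖A‖ := by
  refine ⟨∑ i, ∑ j, ν.N (Matrix.single i j 1),
    Finset.sum_nonneg fun _ _ => Finset.sum_nonneg fun _ _ => ν.nonneg _, fun A => ?_⟩
  conv_lhs => rw [Matrix.matrix_eq_sum_single A]
  simp only [Finset.sum_mul]
  refine (ν.sum_le _ _).trans (Finset.sum_le_sum fun i _ => (ν.sum_le _ _).trans
    (Finset.sum_le_sum fun j _ => ?_))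
  have : Matrix.single i j (A i j) = A i j • Matrix.single i j (1 : ℂ) := by simp
  rw [this, ν.homog, mul_comm]
  exact mul_le_mul_of_nonneg_left (norm_entry_le A i j) (ν.nonneg _)

theorem exists_norm_le_mul : ∃ c : ℝ, 0 ≤ c ∧ ∀ A, ‖A‖ ≤ c * ν.N A := by
  refine ⟨∑ i, ∑ j, ν.N (Matrix.single j i 1),
    Finset.sum_nonneg fun _ _ => Finset.sum_nonneg fun _ _ => ν.nonneg _, fun A => ?_⟩
  refine (norm_le_sum_norm_entries A).trans ?_
  simp only [Finset.sum_mul]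
  refine Finset.sum_le_sum fun i _ => Finset.sum_le_sum fun j _ => ?_
  have h1 : A i j • Matrix.single i i (1 : ℂ) =
      Matrix.single i i 1 * (A * Matrix.single j i 1) := by
    rw [← mul_assoc, Matrix.single_mul_mul_single]
    simp
  have hpos : 0 < ν.N (Matrix.single i i 1) := by
    refine (ν.nonneg _).lt_of_ne' fun h => ?_
    have := congrFun₂ ((ν.definite _).1 h) i i
    simp at this
  have h2 : ν.N (Matrix.single i i 1) * ‖A i j‖ ≤
      ν.N (Matrix.single i i 1) * (ν.N (Matrix.single j i 1) * ν.N A) := by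
    rw [mul_comm, ← ν.homog, h1, mul_comm (ν.N (Matrix.single j i 1))]
    exact (ν.submult _ _).trans
      (mul_le_mul_of_nonneg_left (ν.submult _ _) (ν.nonneg _))
  exact le_of_mul_le_mul_left h2 hpos

end MatrixNorm

theorem measurable_norm_wordProd {d K : ℕ} (S : Fin K → Matrix (Fin d) (Fin d) ℂ) (n : ℕ) :
    Measurable fun x : ℕ → Fin K => ‖wordProd S x n‖ :=
  (Measurable.of_discrete (f := fun w : Fin n → Fin K => ‖finWordProd S w‖)).comp
    (measurable_pi_lambda (fun (x : ℕ → Fin K) (t : Fin n) => x t) fun t =>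
      measurable_pi_apply (t : ℕ))

/-- Either almost every product grows at least at rate `ρ`, or there is a uniform rate below `ρ`
attained by the products along almost every sequence. -/
theorem ae_growth_or_exists_contraction {d K : ℕ} {μ : Measure (ℕ → Fin K)}
    [IsProbabilityMeasure μ] (hμ : Ergodic (shift K) μ) (S : Fin K → Matrix (Fin d) (Fin d) ℂ)
    (ρ : ℝ) :
    (∀ᵐ x ∂μ, ∀ t, 0 < t → t < ρ → ∀ᶠ n in atTop, t ^ n ≤ ‖wordProd S x n‖) ∨
    ∃ t₀, 0 < t₀ ∧ t₀ < ρ ∧ ∀ t, t₀ < t → ∀ᵐ x ∂μ, ∃ n, 1 ≤ n ∧ ‖wordProd S x n‖ ≤ t ^ n := by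
  let A : ℝ → Set (ℕ → Fin K) := fun t =>
    {x | ∃ c : ℕ, ∃ᶠ n in atTop, ‖wordProd S x n‖ ≤ c * t ^ n}
  have hA : ∀ t, MeasurableSet (A t) := by
    intro t
    have : A t = ⋃ c : ℕ, ⋂ a : ℕ, ⋃ b : ℕ, {x | a ≤ b ∧ ‖wordProd S x b‖ ≤ c * t ^ b} := by
      ext x
      simp [A, frequently_atTop]
    rw [this]
    refine .iUnion fun c => .iInter fun a => .iUnion fun b => .inter (.const _) ?_
    exact measurableSet_le (measurable_norm_wordProd S b) measurable_const
  have hsub : ∀ t, 0 < t → shift K ⁻¹' A t ⊆ A t := by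
    rintro t ht x ⟨c, hc⟩
    obtain ⟨B, hB1, hB⟩ := exists_norm_bound S
    obtain ⟨c', hc'⟩ := exists_nat_ge (B * c / t)
    refine ⟨c', frequently_atTop.2 fun a => ?_⟩
    obtain ⟨n, hn, hcn⟩ := frequently_atTop.1 hc a
    refine ⟨1 + n, by omega, ?_⟩
    rw [wordProd_add, wordProd_one]
    calc _ ≤ ‖S (x 0)‖ * ‖wordProd S (shift K x) n‖ := norm_mul_le _ _
      _ ≤ B * (c * t ^ n) := by gcongr; exact hB _
      _ = B * c / t * t ^ (1 + n) := by rw [pow_add]; field_simp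
      _ ≤ c' * t ^ (1 + n) := by gcongr
  have h01 : ∀ t, 0 < t → A t =ᵐ[μ] (∅ : Set _) ∨ A t =ᵐ[μ] Set.univ := fun t ht =>
    hμ.ae_empty_or_univ_of_preimage_ae_le (hA t).nullMeasurableSet
      (LE.le.eventuallyLE (hsub t ht))
  by_cases hex : ∃ t, 0 < t ∧ t < ρ ∧ A t =ᵐ[μ] Set.univ
  · obtain ⟨t₀, ht₀, htρ, hae⟩ := hex
    refine Or.inr ⟨t₀, ht₀, htρ, fun t ht => ?_⟩
    filter_upwards [eventuallyEq_univ.1 hae] with x hx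
    obtain ⟨c, hc⟩ := hx
    obtain ⟨n, h1, h2, h3⟩ := (hc.and_eventually
      ((eventually_mul_pow_lt_pow c ht₀.le ht).and (eventually_ge_atTop 1))).exists
    exact ⟨n, h3, h1.trans h2.le⟩
  · refine Or.inl ?_
    have hq : ∀ q : ℚ, ∀ᵐ x ∂μ, 0 < (q : ℝ) → (q : ℝ) < ρ → x ∉ A q := by
      intro q
      by_cases h : 0 < (q : ℝ) ∧ (q : ℝ) < ρ
      · have hempty := (h01 q h.1).resolve_right fun hu => hex ⟨q, h.1, h.2, hu⟩
        filter_upwards [hempty] with x hx _ _ hmem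
        exact (iff_of_eq hx).1 hmem
      · exact Eventually.of_forall fun x h1 h2 => absurd ⟨h1, h2⟩ h
    filter_upwards [ae_all_iff.2 hq] with x hx t ht htρ
    obtain ⟨q, htq, hqρ⟩ := exists_rat_btwn htρ
    have hnot : ¬ ∃ᶠ n in atTop, ‖wordProd S x n‖ ≤ ((1 : ℕ) : ℝ) * (q : ℝ) ^ n :=
      fun h => hx q (ht.trans htq) hqρ ⟨1, h⟩
    filter_upwards [not_frequently.1 hnot] with n hn
    rw [Nat.cast_one, one_mul, not_le] at hn
    exact (pow_le_pow_left₀ ht.le htq.le n).trans hn.le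

theorem exists_gt_mul_rpow_lt {t q ρ : ℝ} (ht : t < ρ) (hq : 0 < q) :
    ∃ κ : ℝ, 0 < κ ∧ t * q ^ κ < ρ := by
  have h : Tendsto (fun κ : ℝ => t * q ^ κ) (𝓝[>] 0) (𝓝 (t * q ^ (0 : ℝ))) :=
    (((Real.continuous_const_rpow hq.ne').tendsto 0).const_mul t).mono_left nhdsWithin_le_nhds
  rw [Real.rpow_zero, mul_one] at h
  obtain ⟨κ, h1, h2⟩ := ((h.eventually_lt_const ht).and self_mem_nhdsWithin).exists
  exact ⟨κ, h2, h1⟩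

/-- If every diagonal block contracts at a rate below `ρ` along almost every sequence, then so
does the whole lower triangular family, along infinitely many times. -/
theorem frequently_norm_wordProd_le {d r K : ℕ} {n : Fin r → ℕ}
    (e : ((j : Fin r) × Fin (n j)) ≃ Fin d)
    {T : Fin K → Matrix (Fin d) (Fin d) ℂ} (hT : ∀ k x y, x.1 < y.1 → T k (e x) (e y) = 0)
    {μ : Measure (ℕ → Fin K)} [IsProbabilityMeasure μ] (hμ : MeasurePreserving (shift K) μ μ)
    {t ρ : ℝ} (ht : 0 < t) (htρ : t < ρ)
    (hcontr : ∀ j, ∀ᵐ x ∂μ, ∃ m, 1 ≤ m ∧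
      ‖wordProd (fun k => (T k).submatrix (fun a => e ⟨j, a⟩) (fun a => e ⟨j, a⟩)) x m‖ ≤ t ^ m) :
    ∃ s, 0 < s ∧ s < ρ ∧ ∃ C : ℝ, ∃ᶠ x in ae μ, ∃ᶠ N in atTop, ‖wordProd T x N‖ ≤ C * s ^ N := by
  classical
  obtain ⟨C, htC, hC⟩ : ∃ C, t ≤ C ∧
      ∀ j k, ‖(T k).submatrix (fun a => e ⟨j, a⟩) (fun a => e ⟨j, a⟩)‖ ≤ C := by
    obtain ⟨B, -, hB⟩ := exists_norm_bound fun x : Fin r × Fin K =>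
      ‖(T x.2).submatrix (fun a => e ⟨x.1, a⟩) (fun a => e ⟨x.1, a⟩)‖
    exact ⟨max t B, le_max_left _ _, fun j k =>
      ((le_abs_self _).trans (hB (j, k))).trans (le_max_right _ _)⟩
  have hC0 : 0 < C := ht.trans_le htC
  have hq : 1 ≤ C / t := (one_le_div ht).2 htC
  obtain ⟨κ, hκ, hκρ⟩ := exists_gt_mul_rpow_lt htρ (one_pos.trans_le hq)
  set s₀ := t * (C / t) ^ κ with hs₀
  have hs₀pos : 0 < s₀ := by positivity
  obtain ⟨s, hs₀s, hsρ⟩ := exists_between hκρ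
  let G : ℕ → Set (ℕ → Fin K) := fun M => {x | ∀ j, ∃ m, 1 ≤ m ∧ m ≤ M ∧
    ‖wordProd (fun k => (T k).submatrix (fun a => e ⟨j, a⟩) (fun a => e ⟨j, a⟩)) x m‖ ≤ t ^ m}
  have hG : ∀ M, MeasurableSet (G M) := by
    intro M
    have : G M = ⋂ j, ⋃ m, {x | 1 ≤ m ∧ m ≤ M ∧ ‖wordProd (fun k =>
        (T k).submatrix (fun a => e ⟨j, a⟩) (fun a => e ⟨j, a⟩)) x m‖ ≤ t ^ m} := by
      ext x
      simp [G]
    rw [this]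
    refine .iInter fun j => .iUnion fun m => .inter (.const _) (.inter (.const _) ?_)
    exact measurableSet_le (measurable_norm_wordProd _ m) measurable_const
  obtain ⟨M, hM⟩ : ∃ M, μ (G M)ᶜ ≤ ENNReal.ofReal (κ / 2) := by
    have hanti : Antitone fun M => (G M)ᶜ := fun M M' hMM' => Set.compl_subset_compl.2
      fun x hx j => by
        obtain ⟨m, h1, h2, h3⟩ := hx j
        exact ⟨m, h1, h2.trans hMM', h3⟩
    have hlim := tendsto_measure_iInter_atTop (μ := μ)
      (fun M => (hG M).compl.nullMeasurableSet) hanti ⟨0, measure_ne_top _ _⟩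
    have hzero : μ (⋂ M, (G M)ᶜ) = 0 := by
      rw [← Set.compl_iUnion, ← mem_ae_iff]
      filter_upwards [ae_all_iff.2 hcontr] with x hx
      choose m hm1 hm2 using hx
      exact Set.mem_iUnion.2 ⟨∑ j, m j, fun j => ⟨m j, hm1 j,
        Finset.single_le_sum (f := m) (fun _ _ => Nat.zero_le _) (Finset.mem_univ j), hm2 j⟩⟩
    rw [hzero] at hlim
    exact ((hlim.eventually_lt_const (u := ENNReal.ofReal (κ / 2)) (by simpa using hκ)).exists).imp
      fun _ h => h.le
  have hη : 0 < s / s₀ - 1 := sub_pos.2 ((one_lt_div hs₀pos).2 hs₀s)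
  obtain ⟨C', hC'0, hC'⟩ := exists_norm_wordProd_le_prod e hT M ht htC hη hC
  refine ⟨s, hs₀pos.trans hs₀s, hsρ, C',
    (frequently_card_orbit_compl_lt hμ (hG M) hκ hM).mono fun x hx => hx.mono fun N hN => ?_⟩
  let w : ℕ → ℝ := fun p => if (shift K)^[p] x ∉ G M then C else t
  have hw := hC' x w (fun p => by
    by_cases hp : (shift K)^[p] x ∈ G M
    · exact Or.inr ⟨by simp [w, hp], hp⟩
    · exact Or.inl (by simp [w, hp])) N
  have hprod : ∏ p ∈ Finset.range N, w p ≤ s₀ ^ N := by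
    have h1 : ∀ p, w p = t * if (shift K)^[p] x ∉ G M then C / t else 1 := fun p => by
      simp only [w]
      split_ifs <;> field_simp
    simp only [h1, Finset.prod_mul_distrib, Finset.prod_const, Finset.card_range]
    rw [← Finset.prod_filter, Finset.prod_const, hs₀, mul_pow,
      ← Real.rpow_natCast ((C / t) ^ κ), ← Real.rpow_mul (by positivity),
      ← Real.rpow_natCast (C / t)]
    gcongr
    refine le_trans (le_of_eq ?_) hN.le
    congr
  calc ‖wordProd T x N‖ ≤ C' * (1 + (s / s₀ - 1)) ^ N * ∏ p ∈ Finset.range N, w p := hw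
    _ ≤ C' * (1 + (s / s₀ - 1)) ^ N * s₀ ^ N := by
      gcongr
    _ = C' * s ^ N := by
      rw [add_sub_cancel, mul_assoc, ← mul_pow, div_mul_cancel₀ _ hs₀pos.ne']

theorem map_prod_conj {d K : ℕ} {P : Matrix (Fin d) (Fin d) ℂ} (hP : IsUnit P)
    (S : Fin K → Matrix (Fin d) (Fin d) ℂ) (l : List (Fin K)) :
    (l.map fun k => P⁻¹ * S k * P).prod = P⁻¹ * (l.map S).prod * P := by
  have hdet := (Matrix.isUnit_iff_isUnit_det P).1 hP
  induction l with
  | nil => simp [Matrix.nonsing_inv_mul P hdet]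
  | cons k l ih =>
    simp only [List.map_cons, List.prod_cons, ih]
    calc _ = P⁻¹ * S k * (P * P⁻¹) * (l.map S).prod * P := by noncomm_ring
      _ = _ := by rw [Matrix.mul_nonsing_inv P hdet]; noncomm_ring

theorem genSpecRad_conj {d K : ℕ} [NeZero d] {P : Matrix (Fin d) (Fin d) ℂ} (hP : IsUnit P)
    (S : Fin K → Matrix (Fin d) (Fin d) ℂ) :
    genSpecRad (fun k => P⁻¹ * S k * P) = genSpecRad S := by
  have h : ∀ l : List (Fin K),
      spectrum ℂ (l.map fun k => P⁻¹ * S k * P).prod = spectrum ℂ (l.map S).prod := by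
    intro l
    obtain ⟨u, rfl⟩ := hP
    rw [map_prod_conj u.isUnit, ← Matrix.coe_units_inv]
    exact spectrum.units_conjugate'
  exact le_antisymm (genSpecRad_mono fun l => (h l).subset)
    (genSpecRad_mono fun l => (h l).superset)

theorem norm_wordProd_le_of_conj {d K : ℕ} {P : Matrix (Fin d) (Fin d) ℂ} (hP : IsUnit P)
    (S : Fin K → Matrix (Fin d) (Fin d) ℂ) (x : ℕ → Fin K) (n : ℕ) :
    ‖wordProd S x n‖ ≤ ‖P‖ * ‖wordProd (fun k => P⁻¹ * S k * P) x n‖ * ‖P⁻¹‖ := by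
  have hdet := (Matrix.isUnit_iff_isUnit_det P).1 hP
  have h : wordProd S x n = P * wordProd (fun k => P⁻¹ * S k * P) x n * P⁻¹ := by
    rw [wordProd_eq_map_prod, wordProd_eq_map_prod, map_prod_conj hP]
    calc _ = (P * P⁻¹) * (List.map S (List.ofFn fun t : Fin n => x t)).prod * (P * P⁻¹) := by
          rw [Matrix.mul_nonsing_inv P hdet]; simp
      _ = _ := by noncomm_ring
  rw [h]
  exact (norm_mul_le _ _).trans (by gcongr; exact norm_mul_le _ _)

/-- Extremality passes to one of the diagonal blocks of a lower triangular conjugate. -/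
theorem exists_block_ae_growth {d r K : ℕ} {n : Fin r → ℕ} (hr : 1 ≤ r)
    (e : ((j : Fin r) × Fin (n j)) ≃ Fin d)
    {S : Fin K → Matrix (Fin d) (Fin d) ℂ} {P : Matrix (Fin d) (Fin d) ℂ} (hP : IsUnit P)
    (hT : ∀ k x y, x.1 < y.1 → (P⁻¹ * S k * P) (e x) (e y) = 0)
    {μ : Measure (ℕ → Fin K)} [IsProbabilityMeasure μ] (hμ : Ergodic (shift K) μ)
    (ν : MatrixNorm d) (hext : IsExtremal S ν.N μ) :
    ∃ j, ∀ᵐ x ∂μ, ∀ t, 0 < t → t < genSpecRad S → ∀ᶠ m in atTop, t ^ m ≤ ‖wordProd (fun k =>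
      (P⁻¹ * S k * P).submatrix (fun a => e ⟨j, a⟩) (fun a => e ⟨j, a⟩)) x m‖ := by
  by_contra hcon
  rw [not_exists] at hcon
  have hcontr := fun j => (ae_growth_or_exists_contraction hμ (fun k =>
    (P⁻¹ * S k * P).submatrix (fun a => e ⟨j, a⟩) (fun a => e ⟨j, a⟩))
      (genSpecRad S)).resolve_left (hcon j)
  choose t₀ ht₀ ht₀ρ hcontr using hcontr
  have : Nonempty (Fin r) := ⟨⟨0, hr⟩⟩
  obtain ⟨j₀, hj₀⟩ := Finite.exists_max t₀
  obtain ⟨t, htj₀, htρ⟩ := exists_between (ht₀ρ j₀)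
  obtain ⟨s, hs, hsρ, C, hfreq⟩ := frequently_norm_wordProd_le e hT hμ.toMeasurePreserving
    ((ht₀ j₀).trans htj₀) htρ fun j => hcontr j t ((hj₀ j).trans_lt htj₀)
  obtain ⟨x, hx, hlim⟩ := (hfreq.and_eventually hext).exists
  obtain ⟨c, hc0, hc⟩ := ν.exists_le_mul_norm
  obtain ⟨s', hss', hs'ρ⟩ := exists_between hsρ
  obtain ⟨N, hN, h1, h2, hN0⟩ := (hx.and_eventually ((hlim.eventually_const_lt hs'ρ).and
    ((eventually_mul_pow_lt_pow (c * (‖P‖ * C * ‖P⁻¹‖)) hs.le hss').and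
      (eventually_gt_atTop 0)))).exists
  have h3 : s' ^ N < ν.N (wordProd S x N) := by
    have := pow_lt_pow_left₀ h1 (hs.trans hss').le hN0.ne'
    rwa [Real.rpow_inv_natCast_pow (ν.nonneg _) hN0.ne'] at this
  have h4 : ν.N (wordProd S x N) ≤ c * (‖P‖ * C * ‖P⁻¹‖) * s ^ N :=
    calc _ ≤ c * ‖wordProd S x N‖ := hc _
      _ ≤ c * (‖P‖ * (C * s ^ N) * ‖P⁻¹‖) := by
        gcongr
        exact (norm_wordProd_le_of_conj hP S x N).trans (by gcongr)
      _ = _ := by ring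
  linarith

/-- For an irreducible family whose products almost surely grow at every rate below `ρ`, where
`ρ` bounds the generalized spectral radius, the radius is `ρ` and the measure is extremal. -/
theorem IrreducibleFamily.extremal_of_ae_growth {m K : ℕ} [NeZero m]
    {F : Fin K → Matrix (Fin m) (Fin m) ℂ} (hF : IrreducibleFamily F)
    {μ : Measure (ℕ → Fin K)} [IsProbabilityMeasure μ] {ρ : ℝ} (hρ : genSpecRad F ≤ ρ)
    (hgrow : ∀ᵐ x ∂μ, ∀ t, 0 < t → t < ρ → ∀ᶠ n in atTop, t ^ n ≤ ‖wordProd F x n‖) :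
    ρ = genSpecRad F ∧ ∀ ν : MatrixNorm m, IsExtremal F ν.N μ := by
  have hupper : ∀ r, genSpecRad F < r →
      ∃ C : ℝ, 0 ≤ C ∧ ∀ x n, ‖wordProd F x n‖ ≤ C * r ^ n := by
    intro r hr
    obtain ⟨C, hC0, hC⟩ := exists_norm_map_prod_le_pow hF hr
    refine ⟨C, hC0, fun x n => ?_⟩
    rw [wordProd_eq_map_prod]
    simpa using hC (List.ofFn fun t : Fin n => x t)
  have heq : ρ = genSpecRad F := by
    refine le_antisymm (le_of_not_gt fun hlt => ?_) hρ
    obtain ⟨s, hs, hsρ⟩ := exists_between hlt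
    obtain ⟨t, hst, htρ⟩ := exists_between hsρ
    have hs0 : 0 ≤ s := (genSpecRad_nonneg F).trans hs.le
    obtain ⟨C, -, hC⟩ := hupper s hs
    obtain ⟨x, hx⟩ := hgrow.exists
    obtain ⟨n, h1, h2⟩ := ((hx t (hs0.trans_lt hst) htρ).and
      (eventually_mul_pow_lt_pow C hs0 hst)).exists
    exact absurd (h1.trans (hC x n)) h2.not_ge
  refine ⟨heq, fun ν => ?_⟩
  obtain ⟨c, hc0, hc⟩ := ν.exists_le_mul_norm
  obtain ⟨c', hc'0, hc'⟩ := ν.exists_norm_le_mul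
  filter_upwards [hgrow] with x hx
  refine tendsto_rpow_inv_of_growth (fun _ => ν.nonneg _) (genSpecRad_nonneg F) (fun r hr => ?_)
    fun t ht0 ht => ⟨c', ?_⟩
  · obtain ⟨C, -, hC⟩ := hupper r hr
    refine ⟨c * C, fun n => (hc _).trans ?_⟩
    rw [mul_assoc]
    exact mul_le_mul_of_nonneg_left (hC x n) hc0
  · exact (hx t ht0 (heq ▸ ht)).mono fun n hn => hn.trans (hc' _)

/-- Ergodic reduction theorem: for an extremal ergodic measure `μ` of `S`, after a
simultaneous similarity `P⁻¹ S_k P` the family becomes block lower-triangular with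
irreducible diagonal blocks, and for some block `j` one has `ρ(S) = ρ(S̃(j))` with `μ`
also extremal for `S̃(j)`. -/
theorem ergodic_reduction_to_irreducible_blocks
    {d K : ℕ} (hd : 2 ≤ d) (hK : 2 ≤ K)
    (S : Fin K → Matrix (Fin d) (Fin d) ℂ) (ν : MatrixNorm d)
    (μ : Measure (ℕ → Fin K)) [IsProbabilityMeasure μ]
    (hergo : Ergodic (shift K) μ) (hext : IsExtremal S ν.N μ) :
    ∃ (P : Matrix (Fin d) (Fin d) ℂ), IsUnit P ∧
    ∃ (r : ℕ), 1 ≤ r ∧ r ≤ d ∧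
    ∃ (sizes : Fin r → ℕ) (emb : (j : Fin r) → Fin (sizes j) → Fin d),
      (∀ j, 1 ≤ sizes j) ∧
      (∑ j, sizes j) = d ∧
      -- `emb` lays out the blocks consecutively: within each block it is strictly
      -- monotone, blocks appear in order, and together they exhaust `Fin d`.
      (∀ j, StrictMono (emb j)) ∧
      (∀ j j' : Fin r, j < j' → ∀ a b, emb j a < emb j' b) ∧
      (∀ i : Fin d, ∃ j a, emb j a = i) ∧
      -- block lower-triangular form of each `P⁻¹ S_k P`
      (∀ k, ∀ j j' : Fin r, j < j' →
        ∀ a b, (P⁻¹ * S k * P) (emb j a) (emb j' b) = 0) ∧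
      -- each diagonal-block family is irreducible
      (∀ j, IrreducibleFamily fun k => (P⁻¹ * S k * P).submatrix (emb j) (emb j)) ∧
      -- some block realizes the generalized spectral radius and keeps `μ` extremal
      (∃ j : Fin r,
        genSpecRad S = genSpecRad (fun k => (P⁻¹ * S k * P).submatrix (emb j) (emb j)) ∧
        ∀ ν' : MatrixNorm (sizes j),
          IsExtremal (fun k => (P⁻¹ * S k * P).submatrix (emb j) (emb j)) ν'.N μ) := by
  obtain ⟨P, hP, r, hr1, hrd, sizes, emb, hsizes, hsum, hmono, hlt, hsurj, htri, hirr⟩ :=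
    exists_conj_blockTriangular (by omega : 1 ≤ d) S
  refine ⟨P, hP, r, hr1, hrd, sizes, emb, hsizes, hsum, hmono, hlt, hsurj, htri, hirr, ?_⟩
  obtain ⟨e, rfl⟩ := exists_sigma_equiv hmono hlt hsurj
  have : NeZero d := ⟨by omega⟩
  have hT : ∀ k x y, x.1 < y.1 → (P⁻¹ * S k * P) (e x) (e y) = 0 :=
    fun k x y hxy => htri k x.1 y.1 hxy x.2 y.2
  obtain ⟨j, hj⟩ := exists_block_ae_growth hr1 e hP hT hergo ν hext
  have : NeZero (sizes j) := ⟨by have := hsizes j; omega⟩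
  exact ⟨j, (hirr j).extremal_of_ae_growth
    ((genSpecRad_block_le e hT j).trans_eq (genSpecRad_conj hP S)) hj⟩
end
end

section
/- Let S = {S_1,…,S_K} ⊂ ℂ^{d×d}, let P = (p_{ij}) ∈ ℝ^{K×K} be an irreducible stochastic (transition probability) matrix with stationary distribution p = (p_1,…,p_K) satisfying p_k > 0 for all k, and let μ_{p,P} be the associated canonical (p,P)-Markov measure on Σ_K^+. If μ_{p,P} is extremal for S, then S has the spectral finiteness property: there exist n ≥ 1 and a word (i_1,…,i_n) with ρ(S) = ρ(S_{i_1}⋯S_{i_n})^{1/n}. -/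
open Filter MeasureTheory Topology
open scoped ENNReal

noncomputable section

/-- The cylinder set determined by a finite word. -/
def cyl {K : ℕ} {n : ℕ} (w : Fin n → Fin K) : Set (ℕ → Fin K) :=
  {i | ∀ t : Fin n, i t = w t}

namespace MatrixWords

section Linear

open Module (End Dual)

variable {ι V : Type} [AddCommGroup V] [Module ℂ V]

theorem seminorm_apply_le_sum {V' κ : Type} [AddCommGroup V'] [Module ℂ V'] [Fintype κ]
    (b : Module.Basis κ ℂ V) (N : Seminorm ℂ V') (f : V →ₗ[ℂ] V') (x : V) :
    N (f x) ≤ ∑ i, ‖b.coord i x‖ * N (f (b i)) := by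
  have hx : f x = ∑ i, b.coord i x • f (b i) := by
    conv_lhs => rw [← b.sum_repr x, map_sum]
    simp only [map_smul, Module.Basis.coord_apply]
  rw [hx]
  refine (Finset.le_sum_of_subadditive N (map_zero N).le (map_add_le_add N) _ _).trans_eq ?_
  simp [map_smul_eq_mul]

theorem intertwine_prod {V' : Type} [AddCommGroup V'] [Module ℂ V'] {T : ι → End ℂ V}
    {T' : ι → End ℂ V'} {L : V →ₗ[ℂ] V'} (h : ∀ i x, L (T i x) = T' i (L x)) (w : List ι) (x : V) :
    L ((w.map T).prod x) = (w.map T').prod (L x) := by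
  induction w generalizing x with
  | nil => simp
  | cons i w ih => simp [h, ih]

theorem intertwine_pow {V' : Type} [AddCommGroup V'] [Module ℂ V'] {f : End ℂ V}
    {f' : End ℂ V'} {L : V →ₗ[ℂ] V'} (h : ∀ x, L (f x) = f' (L x)) (k : ℕ) (x : V) :
    L ((f ^ k) x) = (f' ^ k) (L x) := by
  induction k generalizing x with
  | zero => simp
  | succ k ih => simp [pow_succ, h, ih]

/-- The powers of `f` tend to zero, tested against linear functionals. -/
def PowTendstoZero (f : End ℂ V) : Prop :=
  ∀ (φ : Dual ℂ V) (x : V), Tendsto (fun k : ℕ => φ ((f ^ k) x)) atTop (𝓝 0)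

theorem PowTendstoZero.of_injective {V' : Type} [AddCommGroup V'] [Module ℂ V'] {f : End ℂ V}
    {f' : End ℂ V'} {L : V →ₗ[ℂ] V'} (hL : Function.Injective L) (h : ∀ x, L (f x) = f' (L x))
    (hf' : PowTendstoZero f') : PowTendstoZero f := by
  intro φ x
  obtain ⟨r, hr⟩ := LinearMap.exists_leftInverse_of_injective L (LinearMap.ker_eq_bot.2 hL)
  refine (hf' (φ ∘ₗ r) (L x)).congr fun k => ?_
  rw [← intertwine_pow h]
  exact congrArg φ (LinearMap.congr_fun hr _)

theorem PowTendstoZero.of_surjective {V' : Type} [AddCommGroup V'] [Module ℂ V'] {f : End ℂ V}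
    {f' : End ℂ V'} {L : V →ₗ[ℂ] V'} (hL : Function.Surjective L) (h : ∀ x, L (f x) = f' (L x))
    (hf : PowTendstoZero f) : PowTendstoZero f' := by
  intro φ y
  obtain ⟨x, rfl⟩ := hL y
  refine (hf (φ ∘ₗ L) x).congr fun k => ?_
  rw [← intertwine_pow h]
  rfl

variable [FiniteDimensional ℂ V]

/-- **Burnside's theorem**: the words in an irreducible family span all endomorphisms. -/
theorem span_words_eq_top [Nontrivial V] (T : ι → End ℂ V)
    (hirr : ∀ W : Submodule ℂ V, (∀ i, ∀ x ∈ W, T i x ∈ W) → W = ⊥ ∨ W = ⊤) :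
    Submodule.span ℂ (Set.range fun w : List ι => (w.map T).prod) = ⊤ := by
  let A := Algebra.adjoin ℂ (Set.range T)
  have hsimple : IsSimpleModule A V :=
    { eq_bot_or_eq_top := fun W => by
        have h := hirr (W.restrictScalars ℂ) fun i x hx =>
          W.smul_mem (⟨T i, Algebra.subset_adjoin ⟨i, rfl⟩⟩ : A) hx
        simpa using h }
  have hA : ∀ f : End ℂ V, f ∈ A := by
    intro f
    let F : End (End A V) V :=
      { toFun := f
        map_add' := map_add f
        map_smul' := fun g x => by
          obtain ⟨c, rfl⟩ :=
            (IsSimpleModule.algebraMap_end_bijective_of_isAlgClosed (A := A) (V := V) ℂ).2 g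
          simp }
    let b := Module.finBasis ℂ V
    classical
    obtain ⟨r, hr⟩ := jacobson_density F (Finset.univ.image b)
    have : f = r := b.ext fun i => hr (b i) (by simp)
    exact this ▸ r.2
  have hspan : Subalgebra.toSubmodule A = ⊤ := by
    ext f; simp [hA f]
  rw [eq_top_iff, ← hspan, Algebra.adjoin_eq_span]
  refine Submodule.span_mono fun f hf => ?_
  induction hf using Submonoid.closure_induction with
  | mem f hf => obtain ⟨i, rfl⟩ := hf; exact ⟨[i], by simp⟩
  | one => exact ⟨[], by simp⟩
  | mul f g _ _ hf hg =>
    obtain ⟨u, rfl⟩ := hf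
    obtain ⟨v, rfl⟩ := hg
    exact ⟨u ++ v, by simp⟩

theorem norm_trace_le (f : End ℂ V) (hf : ∀ z, f.HasEigenvalue z → ‖z‖ ≤ 1) :
    ‖LinearMap.trace ℂ V f‖ ≤ Module.finrank ℂ V := by
  rw [End.trace_eq_sum_roots_charpoly_of_splits (IsAlgClosed.splits _)]
  have h : ∀ s : Multiset ℂ, (∀ z ∈ s, ‖z‖ ≤ 1) → ‖s.sum‖ ≤ s.card := by
    intro s
    induction s using Multiset.induction with
    | empty => simp
    | cons a s ih =>
      intro hs
      have h1 := hs a (by simp)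
      have h2 := ih fun z hz => hs z (by simp [hz])
      have := norm_add_le a s.sum
      simp only [Multiset.sum_cons, Multiset.card_cons, Nat.cast_add, Nat.cast_one]
      linarith
  refine (h _ fun z hz => hf z ?_).trans ?_
  · rw [End.hasEigenvalue_iff_isRoot_charpoly]
    exact Polynomial.isRoot_of_mem_roots hz
  · rw [← LinearMap.charpoly_natDegree f]
    exact_mod_cast Polynomial.card_roots' _

theorem PowTendstoZero.norm_le_one {f : End ℂ V} (hf : PowTendstoZero f) {z : ℂ}
    (hz : f.HasEigenvalue z) : ‖z‖ ≤ 1 := by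
  obtain ⟨x, hx⟩ := hz.exists_hasEigenvector
  obtain ⟨φ, hφ⟩ : ∃ φ : Dual ℂ V, φ x ≠ 0 := by
    by_contra! h
    exact hx.2 ((Module.forall_dual_apply_eq_zero_iff ℂ x).1 h)
  have hlim : Tendsto (fun k : ℕ => ‖z‖ ^ k) atTop (𝓝 0) := by
    have h := (hf φ x).norm.mul_const ‖φ x‖⁻¹
    simp only [hx.pow_apply, map_smul, smul_eq_mul, norm_mul, norm_pow, norm_zero, zero_mul] at h
    simpa [mul_assoc, hφ] using h
  exact (tendsto_pow_atTop_nhds_zero_iff_norm_lt_one.1 hlim).le.trans' (le_abs_self _)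

/-- An irreducible family whose words are all asymptotically stable is product bounded. -/
theorem exists_bound_words [Nontrivial V] (T : ι → End ℂ V)
    (hirr : ∀ W : Submodule ℂ V, (∀ i, ∀ x ∈ W, T i x ∈ W) → W = ⊥ ∨ W = ⊤)
    (hT : ∀ w : List ι, w ≠ [] → PowTendstoZero (w.map T).prod) (φ : Dual ℂ V) (x : V) :
    ∃ C, ∀ w : List ι, ‖φ ((w.map T).prod x)‖ ≤ C := by
  have key : ∀ B : End ℂ V, ∃ C, ∀ w : List ι,
      ‖LinearMap.trace ℂ V ((w.map T).prod * B)‖ ≤ C := by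
    intro B
    have hB : B ∈ Submodule.span ℂ (Set.range fun w : List ι => (w.map T).prod) := by
      rw [span_words_eq_top T hirr]; trivial
    induction hB using Submodule.span_induction with
    | mem B hB =>
      obtain ⟨v, rfl⟩ := hB
      refine ⟨Module.finrank ℂ V, fun w => ?_⟩
      dsimp only
      rw [← List.prod_append, ← List.map_append]
      by_cases h : w ++ v = []
      · simp [h]
      · exact norm_trace_le _ fun z hz => (hT _ h).norm_le_one hz
    | zero => exact ⟨0, by simp⟩
    | add B B' _ _ h h' =>
      obtain ⟨C, hC⟩ := h
      obtain ⟨C', hC'⟩ := h'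
      refine ⟨C + C', fun w => ?_⟩
      rw [mul_add, map_add]
      exact (norm_add_le _ _).trans (add_le_add (hC w) (hC' w))
    | smul c B _ h =>
      obtain ⟨C, hC⟩ := h
      refine ⟨‖c‖ * C, fun w => ?_⟩
      rw [mul_smul_comm, map_smul, smul_eq_mul, norm_mul]
      gcongr
      exact hC w
  obtain ⟨C, hC⟩ := key (φ.smulRight x)
  refine ⟨C, fun w => ?_⟩
  have : (w.map T).prod * φ.smulRight x = φ.smulRight ((w.map T).prod x) := by
    ext y; simp
  simpa [this] using hC w

/-- A seminorm dominating every linear functional. -/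
def Coercive (N : Seminorm ℂ V) : Prop :=
  ∀ φ : Dual ℂ V, ∃ C, ∀ x, ‖φ x‖ ≤ C * N x

theorem Coercive.exists_le {V' : Type} [AddCommGroup V'] [Module ℂ V'] {N : Seminorm ℂ V}
    (hN : Coercive N) (N' : Seminorm ℂ V') (f : V →ₗ[ℂ] V') :
    ∃ C, ∀ x, N' (f x) ≤ C * N x := by
  let b := Module.finBasis ℂ V
  choose C hC using fun i => hN (b.coord i)
  refine ⟨∑ i, C i * N' (f (b i)), fun x => ?_⟩
  refine (seminorm_apply_le_sum b N' f x).trans ?_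
  rw [Finset.sum_mul]
  exact Finset.sum_le_sum fun i _ => by nlinarith [hC i x, apply_nonneg N' (f (b i))]

theorem PowTendstoZero.eventually_le {f : End ℂ V} (hf : PowTendstoZero f) {N : Seminorm ℂ V}
    (hN : Coercive N) {r : ℝ} (hr : 0 < r) : ∀ᶠ k in atTop, ∀ x, N ((f ^ k) x) ≤ r * N x := by
  let b := Module.finBasis ℂ V
  choose C hC using fun i => hN (b.coord i)
  have hlim : Tendsto (fun k : ℕ => ∑ i, ∑ j, C i * (‖b.coord j ((f ^ k) (b i))‖ * N (b j)))
      atTop (𝓝 (∑ i, ∑ j, C i * (‖(0 : ℂ)‖ * N (b j)))) :=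
    tendsto_finsetSum _ fun i _ => tendsto_finsetSum _ fun j _ =>
      ((hf (b.coord j) (b i)).norm.mul_const _).const_mul _
  have h0 : (∑ i, ∑ j, C i * (‖(0 : ℂ)‖ * N (b j))) < r := by simpa using hr
  filter_upwards [hlim.eventually_lt_const h0] with k hk x
  have hb : ∀ y, N y ≤ ∑ j, ‖b.coord j y‖ * N (b j) := seminorm_apply_le_sum b N LinearMap.id
  calc N ((f ^ k) x) ≤ ∑ i, ‖b.coord i x‖ * N ((f ^ k) (b i)) :=
        seminorm_apply_le_sum b N (f ^ k) x
    _ ≤ ∑ i, C i * (∑ j, ‖b.coord j ((f ^ k) (b i))‖ * N (b j)) * N x := by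
        refine Finset.sum_le_sum fun i _ => ?_
        have h1 := hC i x
        have h2 := hb ((f ^ k) (b i))
        have h3 := apply_nonneg N ((f ^ k) (b i))
        have h4 := norm_nonneg (b.coord i x)
        calc _ ≤ (C i * N x) * (∑ j, ‖b.coord j ((f ^ k) (b i))‖ * N (b j)) :=
              mul_le_mul h1 h2 h3 (h4.trans h1)
          _ = _ := by ring
    _ = (∑ i, ∑ j, C i * (‖b.coord j ((f ^ k) (b i))‖ * N (b j))) * N x := by
        rw [Finset.sum_mul]; simp_rw [Finset.mul_sum]
    _ ≤ r * N x := mul_le_mul_of_nonneg_right hk.le (apply_nonneg N x)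

/-- In the irreducible case there is an extremal norm. -/
theorem exists_extremal_norm [Nontrivial V] (T : ι → End ℂ V)
    (hirr : ∀ W : Submodule ℂ V, (∀ i, ∀ x ∈ W, T i x ∈ W) → W = ⊥ ∨ W = ⊤)
    (hT : ∀ w : List ι, w ≠ [] → PowTendstoZero (w.map T).prod) :
    ∃ N : Seminorm ℂ V, Coercive N ∧ ∀ i x, N (T i x) ≤ N x := by
  let b := Module.finBasis ℂ V
  let N₀ : Seminorm ℂ V := ∑ i, (normSeminorm ℂ ℂ).comp (b.coord i)
  have hN₀ : ∀ x, N₀ x = ∑ i, ‖b.coord i x‖ := fun x => by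
    have h := congrFun (map_sum (FunLike.coeAddMonoidHom (Seminorm ℂ V) V ℝ)
      (fun i => (normSeminorm ℂ ℂ).comp (b.coord i)) Finset.univ) x
    rwa [Finset.sum_apply] at h
  let q : List ι → Seminorm ℂ V := fun w => N₀.comp (w.map T).prod
  have hq : ∀ x, BddAbove (Set.range fun w => q w x) := by
    intro x
    choose C hC using fun i => exists_bound_words T hirr hT (b.coord i) x
    refine ⟨∑ i, C i, ?_⟩
    rintro _ ⟨w, rfl⟩
    simp only [q, Seminorm.comp_apply, hN₀]
    exact Finset.sum_le_sum fun i _ => hC i w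
  have hN : ∀ x, (⨆ w, q w) x = ⨆ w, q w x := fun x =>
    Seminorm.iSup_apply (Seminorm.bddAbove_range_iff.2 hq)
  refine ⟨⨆ w, q w, fun φ => ?_, fun i x => ?_⟩
  · refine ⟨∑ i, ‖φ (b i)‖, fun x => ?_⟩
    have h1 : N₀ x ≤ (⨆ w, q w) x := by
      rw [hN]
      simpa [q] using le_ciSup (hq x) []
    have h2 : ‖φ x‖ ≤ ∑ i, ‖b.coord i x‖ * ‖φ (b i)‖ :=
      seminorm_apply_le_sum b (normSeminorm ℂ ℂ) φ x
    refine h2.trans ?_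
    rw [Finset.sum_mul]
    refine Finset.sum_le_sum fun i _ => ?_
    rw [mul_comm]
    refine mul_le_mul_of_nonneg_left ?_ (norm_nonneg _)
    refine le_trans ?_ h1
    rw [hN₀]
    exact Finset.single_le_sum (f := fun i => ‖b.coord i x‖) (fun j _ => norm_nonneg _)
      (Finset.mem_univ i)
  · rw [hN, hN]
    refine ciSup_le fun w => ?_
    have := le_ciSup (hq x) (w ++ [i])
    simpa [q] using this
/-- Norms on an invariant subspace and on the quotient combine, up to an arbitrarily small loss. -/
theorem exists_glued_norm {J : Type} [Finite J] (W : Submodule ℂ V) (f : J → End ℂ V)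
    (g : J → End ℂ W) (h : J → End ℂ (V ⧸ W))
    (hg : ∀ j w, W.subtype (g j w) = f j (W.subtype w))
    (hh : ∀ j x, W.mkQ (f j x) = h j (W.mkQ x)) {N₁ : Seminorm ℂ W} {N₂ : Seminorm ℂ (V ⧸ W)}
    (hN₁ : Coercive N₁) (hN₂ : Coercive N₂) {c : J → ℝ} (h₁ : ∀ j w, N₁ (g j w) ≤ c j * N₁ w)
    (h₂ : ∀ j y, N₂ (h j y) ≤ c j * N₂ y) {ε : ℝ} (hε : 0 < ε) :
    ∃ N : Seminorm ℂ V, Coercive N ∧ ∀ j x, N (f j x) ≤ (c j + ε) * N x := by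
  obtain ⟨s, hs⟩ := LinearMap.exists_rightInverse_of_surjective W.mkQ (Submodule.range_mkQ W)
  have hs' : ∀ y, W.mkQ (s y) = y := LinearMap.congr_fun hs
  let r : V →ₗ[ℂ] W := (LinearMap.id - s ∘ₗ W.mkQ).codRestrict W fun x => by
    refine (Submodule.Quotient.mk_eq_zero W).1 (?_ : W.mkQ _ = 0)
    rw [LinearMap.sub_apply, map_sub, LinearMap.comp_apply, hs', LinearMap.id_apply, sub_self]
  have hr : ∀ x, x = W.subtype (r x) + s (W.mkQ x) := fun x => by simp [r]
  have hrW : ∀ w : W, r (W.subtype w) = w := fun w => by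
    ext; simp [r, (Submodule.Quotient.mk_eq_zero W).2 w.2, -Submodule.Quotient.mk_eq_zero]
  choose C hC using fun j => hN₂.exists_le N₁ (r ∘ₗ f j ∘ₗ s)
  obtain ⟨M, hM⟩ := (Set.finite_range C).bddAbove
  let L : NNReal := ⟨max (M / ε) 1, by positivity⟩
  have hL : ∀ j, C j ≤ ε * L := fun j => by
    have h1 : C j ≤ M := hM ⟨j, rfl⟩
    have h2 : M / ε ≤ L := le_max_left _ _
    rw [div_le_iff₀ hε] at h2
    linarith
  have hL1 : 1 ≤ (L : ℝ) := le_max_right _ _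
  let N : Seminorm ℂ V := N₁.comp r + L • N₂.comp W.mkQ
  have hN : ∀ x, N x = N₁ (r x) + L * N₂ (W.mkQ x) := fun x => rfl
  refine ⟨N, fun φ => ?_, fun j x => ?_⟩
  · obtain ⟨A, hA⟩ := hN₁ (φ ∘ₗ W.subtype)
    obtain ⟨B, hB⟩ := hN₂ (φ ∘ₗ s)
    refine ⟨|A| + |B|, fun x => ?_⟩
    have e : φ x = φ (W.subtype (r x)) + φ (s (W.mkQ x)) := by
      conv_lhs => rw [hr x, map_add]
    have h1 := hA (r x)
    have h2 := hB (W.mkQ x)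
    have h3 := norm_add_le (φ (W.subtype (r x))) (φ (s (W.mkQ x)))
    have n1 := apply_nonneg N₁ (r x)
    have n2 := apply_nonneg N₂ (W.mkQ x)
    simp only [LinearMap.comp_apply] at h1 h2
    rw [e, hN]
    have a1 : A * N₁ (r x) ≤ |A| * N₁ (r x) := by gcongr; exact le_abs_self A
    have a2 : B * N₂ (W.mkQ x) ≤ |B| * (L * N₂ (W.mkQ x)) :=
      mul_le_mul (le_abs_self B) (by nlinarith) n2 (abs_nonneg B)
    have a3 : 0 ≤ |A| * (L * N₂ (W.mkQ x)) := by positivity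
    have a4 : 0 ≤ |B| * N₁ (r x) := by positivity
    linarith
  · have e : r (f j x) = g j (r x) + r (f j (s (W.mkQ x))) := by
      conv_lhs => rw [hr x, map_add, ← hg, map_add, hrW]
    have n1 := apply_nonneg N₁ (r x)
    have n2 := apply_nonneg N₂ (W.mkQ x)
    have h3 := hC j (W.mkQ x)
    simp only [LinearMap.comp_apply] at h3
    have h4 : C j * N₂ (W.mkQ x) ≤ ε * L * N₂ (W.mkQ x) := by gcongr; exact hL j
    have h5 := map_add_le_add N₁ (g j (r x)) (r (f j (s (W.mkQ x))))
    have h6 : L * N₂ (h j (W.mkQ x)) ≤ L * (c j * N₂ (W.mkQ x)) := by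
      gcongr; exact h₂ j _
    have h7 := h₁ j (r x)
    rw [hN, hN, hh, e]
    nlinarith

end Linear

section Induction

open Module (End Dual)

/-- A family whose words are asymptotically stable admits almost nonexpansive norms, for which a
fixed power of a given word is almost `1 / 2`-contracting. -/
theorem exists_almost_extremal_norm {ι : Type} [Finite ι] {V : Type} [AddCommGroup V] [Module ℂ V]
    [FiniteDimensional ℂ V] (T : ι → End ℂ V)
    (hT : ∀ w : List ι, w ≠ [] → PowTendstoZero (w.map T).prod) (u : List ι) (hu : u ≠ []) :
    ∀ᶠ k in atTop, ∀ ε : ℝ, 0 < ε → ∃ N : Seminorm ℂ V, Coercive N ∧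
      (∀ i x, N (T i x) ≤ (1 + ε) * N x) ∧
      ∀ x, N (((u.map T).prod ^ k) x) ≤ (1 / 2 + ε) * N x := by
  induction hn : Module.finrank ℂ V using Nat.strong_induction_on generalizing V with
  | _ n ih =>
  subst hn
  rcases subsingleton_or_nontrivial V with hV | hV
  · refine .of_forall fun k ε _ => ⟨0, fun φ => ⟨0, fun x => ?_⟩, fun i x => ?_, fun x => ?_⟩
    · simp [Subsingleton.elim x 0]
    · simp
    · simp
  by_cases hirr : ∀ W : Submodule ℂ V, (∀ i, ∀ x ∈ W, T i x ∈ W) → W = ⊥ ∨ W = ⊤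
  · obtain ⟨N, hN, hNT⟩ := exists_extremal_norm T hirr hT
    filter_upwards [(hT u hu).eventually_le hN one_half_pos] with k hk ε hε
    refine ⟨N, hN, fun i x => (hNT i x).trans ?_, fun x => (hk x).trans ?_⟩
    · nlinarith [apply_nonneg N x]
    · nlinarith [apply_nonneg N x]
  · push Not at hirr
    obtain ⟨W, hW, hbot, htop⟩ := hirr
    let TW : ι → End ℂ W := fun i => (T i).restrict (hW i)
    let TQ : ι → End ℂ (V ⧸ W) := fun i => W.mapQ W (T i) (hW i)
    have hTW : ∀ i w, W.subtype (TW i w) = T i (W.subtype w) := fun i w => rfl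
    have hTQ : ∀ i x, W.mkQ (T i x) = TQ i (W.mkQ x) := fun i x => rfl
    have dW := Submodule.finrank_lt htop
    have dQ : Module.finrank ℂ (V ⧸ W) < Module.finrank ℂ V := by
      have h1 := Submodule.finrank_quotient_add_finrank W
      have h2 : Module.finrank ℂ W ≠ 0 := fun h => hbot (Submodule.finrank_eq_zero.1 h)
      omega
    filter_upwards [
      ih _ dW TW (fun w hw => (hT w hw).of_injective W.injective_subtype
        (intertwine_prod hTW w)) rfl,
      ih _ dQ TQ (fun w hw => (hT w hw).of_surjective W.mkQ_surjective
        (intertwine_prod hTQ w)) rfl] with k hk₁ hk₂ ε hε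
    obtain ⟨N₁, hN₁, hT₁, hu₁⟩ := hk₁ (ε / 2) (half_pos hε)
    obtain ⟨N₂, hN₂, hT₂, hu₂⟩ := hk₂ (ε / 2) (half_pos hε)
    obtain ⟨N, hN, hNT⟩ := exists_glued_norm (J := Option ι) W
      (fun j => j.elim ((u.map T).prod ^ k) T) (fun j => j.elim ((u.map TW).prod ^ k) TW)
      (fun j => j.elim ((u.map TQ).prod ^ k) TQ)
      (by
        rintro (_ | i) w
        · exact intertwine_pow (intertwine_prod hTW u) k w
        · exact hTW i w)
      (by
        rintro (_ | i) x
        · exact intertwine_pow (intertwine_prod hTQ u) k x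
        · exact hTQ i x)
      hN₁ hN₂ (c := fun j => j.elim (1 / 2 + ε / 2) fun _ => 1 + ε / 2)
      (by
        rintro (_ | i) w
        · exact hu₁ w
        · exact hT₁ i w)
      (by
        rintro (_ | i) y
        · exact hu₂ y
        · exact hT₂ i y)
      (half_pos hε)
    refine ⟨N, hN, fun i x => (hNT (some i) x).trans_eq ?_, fun x => (hNT none x).trans_eq ?_⟩
    · simp only [Option.elim]; ring
    · simp only [Option.elim]; ring

end Induction

section SpectralRadius

variable {d K : ℕ}

attribute [local instance] Matrix.linftyOpNormedRing Matrix.linftyOpNormedAlgebra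

theorem spectralRadius_ne_top [NeZero d] (B : Matrix (Fin d) (Fin d) ℂ) :
    spectralRadius ℂ B ≠ ⊤ := by
  have := Matrix.linfty_opNormOneClass (n := Fin d) (α := ℂ)
  have : CompleteSpace (Matrix (Fin d) (Fin d) ℂ) := FiniteDimensional.complete ℂ _
  exact ne_top_of_le_ne_top ENNReal.coe_ne_top (spectrum.spectralRadius_le_nnnorm B)

theorem specRad_nonneg (B : Matrix (Fin d) (Fin d) ℂ) : 0 ≤ specRad B := ENNReal.toReal_nonneg

theorem specRad_pow_le [NeZero d] (B : Matrix (Fin d) (Fin d) ℂ) (n : ℕ) (hn : n ≠ 0) :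
    specRad B ^ n ≤ specRad (B ^ n) := by
  rw [specRad, ← ENNReal.toReal_pow]
  exact ENNReal.toReal_mono (spectralRadius_ne_top _) (spectrum.spectralRadius_pow_le B n hn)

theorem powTendstoZero_of_specRad_lt [NeZero d] {B : Matrix (Fin d) (Fin d) ℂ} {r : ℝ}
    (h : specRad B < r) : PowTendstoZero (Matrix.toLin' ((r⁻¹ : ℂ) • B)) := by
  have : CompleteSpace (Matrix (Fin d) (Fin d) ℂ) := FiniteDimensional.complete ℂ _
  obtain ⟨q, hBq, hqr⟩ := exists_between h
  have hq : 0 ≤ q := (specRad_nonneg B).trans hBq.le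
  have hr : 0 < r := hq.trans_lt hqr
  have hlt : spectralRadius ℂ B < ENNReal.ofReal q :=
    (ENNReal.lt_ofReal_iff_toReal_lt (spectralRadius_ne_top B)).2 hBq
  have hev : ∀ᶠ n : ℕ in atTop, ‖((r⁻¹ : ℂ) • B) ^ n‖ ≤ (q / r) ^ n := by
    filter_upwards [(spectrum.pow_norm_pow_one_div_tendsto_nhds_spectralRadius B).eventually_lt_const
      hlt, eventually_ge_atTop 1] with n hn hn1
    have h1 : ‖B ^ n‖ ^ (1 / n : ℝ) ≤ q := ((ENNReal.ofReal_lt_ofReal_iff_of_nonneg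
      (by positivity)).1 hn).le
    have h2 : ‖B ^ n‖ ≤ q ^ n := by
      have h3 := pow_le_pow_left₀ (by positivity) h1 n
      rwa [one_div, Real.rpow_inv_natCast_pow (norm_nonneg _) (by omega)] at h3
    rw [smul_pow, norm_smul, norm_pow, norm_inv, Complex.norm_real, Real.norm_of_nonneg hr.le,
      div_pow, div_eq_inv_mul, inv_pow]
    gcongr
  have hlim : Tendsto (fun n : ℕ => ((r⁻¹ : ℂ) • B) ^ n) atTop (𝓝 0) :=
    squeeze_zero_norm' hev
      (tendsto_pow_atTop_nhds_zero_of_lt_one (by positivity) ((div_lt_one hr).2 hqr))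
  intro φ x
  let L : Matrix (Fin d) (Fin d) ℂ →ₗ[ℂ] ℂ := φ ∘ₗ LinearMap.applyₗ x ∘ₗ Matrix.toLin'.toLinearMap
  have hL := (L.continuous_of_finiteDimensional.tendsto 0).comp hlim
  rw [map_zero] at hL
  refine hL.congr fun k => ?_
  simp [L, Matrix.toLin'_pow]

variable (S : Fin K → Matrix (Fin d) (Fin d) ℂ)

theorem exists_specRad_root_le [NeZero d] :
    ∃ R : ℝ, ∀ (n : ℕ) (w : Fin n → Fin K), specRad (finWordProd S w) ^ ((n : ℝ)⁻¹) ≤ R := by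
  have := Matrix.linfty_opNormOneClass (n := Fin d) (α := ℂ)
  have : CompleteSpace (Matrix (Fin d) (Fin d) ℂ) := FiniteDimensional.complete ℂ _
  obtain ⟨R, hR, hSR⟩ : ∃ R : ℝ, 1 ≤ R ∧ ∀ i, ‖S i‖ ≤ R := by
    refine ⟨1 + ∑ i, ‖S i‖, le_add_of_nonneg_right (by positivity), fun i => ?_⟩
    have := Finset.single_le_sum (f := fun i => ‖S i‖) (fun i _ => norm_nonneg _)
      (Finset.mem_univ i)
    linarith
  refine ⟨R, fun n w => ?_⟩
  rcases eq_or_ne n 0 with rfl | hn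
  · simpa using hR
  have h1 : specRad (finWordProd S w) ≤ ‖finWordProd S w‖ := by
    have := ENNReal.toReal_mono ENNReal.coe_ne_top
      (spectrum.spectralRadius_le_nnnorm (𝕜 := ℂ) (finWordProd S w))
    simpa [specRad] using this
  have h2 : ‖finWordProd S w‖ ≤ R ^ n := by
    refine (List.norm_prod_le _).trans ?_
    rw [List.map_ofFn, List.prod_ofFn]
    refine (Finset.prod_le_prod (g := fun _ => R) (fun t _ => norm_nonneg _)
      fun t _ => hSR (w t)).trans_eq (by simp)
  calc _ ≤ (R ^ n) ^ ((n : ℝ)⁻¹) :=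
        Real.rpow_le_rpow (specRad_nonneg _) (h1.trans h2) (by positivity)
    _ = R := Real.pow_rpow_inv_natCast (by positivity) hn

theorem finWordProd_get (l : List (Fin K)) : finWordProd S l.get = (l.map S).prod := by
  have h : (List.ofFn l.get).map S = List.ofFn (S ∘ l.get) := List.map_ofFn
  rw [List.ofFn_get] at h
  rw [h]
  rfl

theorem specRad_root_le_genSpecRad [NeZero d] (l : List (Fin K)) (hl : l ≠ []) :
    specRad (l.map S).prod ^ ((l.length : ℝ)⁻¹) ≤ genSpecRad S := by
  obtain ⟨R, hR⟩ := exists_specRad_root_le S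
  have : Nonempty (Fin K) := ⟨l.head hl⟩
  refine le_limsup_of_frequently_le (frequently_atTop.2 fun m => ?_)
    (isBoundedUnder_of ⟨R, fun n => ciSup_le fun w => hR n w⟩)
  have hlen : 0 < l.length := List.length_pos_iff.2 hl
  let v := (List.replicate (m + 1) l).flatten
  have hv : v.length = (m + 1) * l.length := by simp [v]
  refine ⟨v.length, by rw [hv]; nlinarith, ?_⟩
  refine le_trans ?_ (le_ciSup (f := fun w : Fin v.length → Fin K =>
    specRad (finWordProd S w) ^ ((v.length : ℝ)⁻¹)) ⟨R, by rintro _ ⟨w, rfl⟩; exact hR _ w⟩ v.get)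
  have hprod : (v.map S).prod = (l.map S).prod ^ (m + 1) := by
    simp [v, List.map_flatten, List.prod_flatten]
  rw [finWordProd_get, hprod, hv]
  calc specRad (l.map S).prod ^ ((l.length : ℝ)⁻¹)
      = (specRad (l.map S).prod ^ (m + 1)) ^ ((((m + 1) * l.length : ℕ) : ℝ)⁻¹) := by
        rw [Nat.cast_mul, mul_inv, Real.rpow_mul (pow_nonneg (specRad_nonneg _) _),
          Real.pow_rpow_inv_natCast (specRad_nonneg _) (by omega)]
    _ ≤ _ := Real.rpow_le_rpow (pow_nonneg (specRad_nonneg _) _)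
        (specRad_pow_le _ _ (by omega)) (by positivity)

theorem specRad_lt_of_not_finiteness [NeZero d] (hS : ¬ HasFinitenessProperty S)
    (l : List (Fin K)) (hl : l ≠ []) : specRad (l.map S).prod < genSpecRad S ^ l.length := by
  have hlen : 0 < l.length := List.length_pos_iff.2 hl
  have hlt : specRad (l.map S).prod ^ ((l.length : ℝ)⁻¹) < genSpecRad S := by
    refine lt_of_le_of_ne (specRad_root_le_genSpecRad S l hl) fun h => hS ?_
    exact ⟨l.length, hlen, l.get, by rw [finWordProd_get, h]⟩
  have := pow_lt_pow_left₀ hlt (Real.rpow_nonneg (specRad_nonneg _) _) hlen.ne'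
  rwa [Real.rpow_inv_natCast_pow (specRad_nonneg _) hlen.ne'] at this

/-- The family normalised to have generalized spectral radius one, as linear maps. -/
def normalized (i : Fin K) : Module.End ℂ (Fin d → ℂ) :=
  Matrix.toLin' (((genSpecRad S)⁻¹ : ℂ) • S i)

theorem prod_normalized (l : List (Fin K)) : (l.map (normalized S)).prod =
    Matrix.toLin' ((((genSpecRad S) ^ l.length : ℝ) : ℂ)⁻¹ • (l.map S).prod) := by
  induction l with
  | nil => simp; rfl
  | cons i l ih =>
    rw [List.map_cons, List.prod_cons, ih, normalized, Module.End.mul_eq_comp, ← Matrix.toLin'_mul,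
      smul_mul_smul_comm]
    simp [pow_succ, mul_comm]

theorem powTendstoZero_normalized [NeZero d] (hS : ¬ HasFinitenessProperty S)
    (l : List (Fin K)) (hl : l ≠ []) : PowTendstoZero (l.map (normalized S)).prod := by
  rw [prod_normalized]
  exact powTendstoZero_of_specRad_lt (specRad_lt_of_not_finiteness S hS l hl)

theorem exists_matrixNorm_le (ν : MatrixNorm d) {N : Seminorm ℂ (Fin d → ℂ)} (hN : Coercive N) :
    ∃ C, ∀ (B : Matrix (Fin d) (Fin d) ℂ) (r : ℝ), (∀ x, N (Matrix.toLin' B x) ≤ r * N x) →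
      ν.N B ≤ C * r := by
  let p : Seminorm ℂ (Matrix (Fin d) (Fin d) ℂ) := Seminorm.of ν.N ν.triangle ν.homog
  choose C hC using fun i => hN (LinearMap.proj i)
  have hC0 : ∀ (i : Fin d) (y : Fin d → ℂ), ‖y i‖ ≤ |C i| * N y := fun i y =>
    (hC i y).trans (mul_le_mul_of_nonneg_right (le_abs_self _) (apply_nonneg N y))
  refine ⟨∑ i, ∑ j, |C i| * N (Pi.single j 1) * p (Matrix.single i j 1), fun B r hB => ?_⟩
  calc ν.N B = p (∑ i, ∑ j, Matrix.single i j (B i j)) := by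
        rw [← Matrix.matrix_eq_sum_single]; rfl
    _ ≤ ∑ i, ∑ j, p (Matrix.single i j (B i j)) :=
        (Finset.le_sum_of_subadditive p (map_zero p).le (map_add_le_add p) _ _).trans
          (Finset.sum_le_sum fun i _ =>
            Finset.le_sum_of_subadditive p (map_zero p).le (map_add_le_add p) _ _)
    _ ≤ ∑ i, ∑ j, |C i| * N (Pi.single j 1) * p (Matrix.single i j 1) * r := by
        refine Finset.sum_le_sum fun i _ => Finset.sum_le_sum fun j _ => ?_
        have e : Matrix.single i j (B i j) = B i j • Matrix.single i j (1 : ℂ) := by simp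
        have h1 : ‖B i j‖ ≤ |C i| * (r * N (Pi.single j 1)) := by
          have h2 := hC0 i (Matrix.toLin' B (Pi.single j 1))
          simp only [Matrix.toLin'_apply, Matrix.mulVec_single_one, Matrix.col_apply] at h2
          refine h2.trans (mul_le_mul_of_nonneg_left ?_ (abs_nonneg _))
          simpa [Matrix.toLin'_apply, Matrix.mulVec_single_one] using hB (Pi.single j 1)
        rw [e, map_smul_eq_mul]
        calc _ ≤ |C i| * (r * N (Pi.single j 1)) * p (Matrix.single i j 1) :=
              mul_le_mul_of_nonneg_right h1 (apply_nonneg p _)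
          _ = _ := by ring
    _ = _ := by simp_rw [← Finset.sum_mul]

end SpectralRadius

section Blocks

variable {ι : Type}

/-- The word formed by the first `n` letters of `i`. -/
def initialWord (i : ℕ → ι) (n : ℕ) : List ι := List.ofFn fun t : Fin n => i t

theorem initialWord_add (i : ℕ → ι) (a b : ℕ) :
    initialWord i (a + b) = initialWord i a ++ initialWord (fun t => i (a + t)) b := by
  simp [initialWord, List.ofFn_add]

theorem length_initialWord (i : ℕ → ι) (n : ℕ) : (initialWord i n).length = n :=
  List.length_ofFn

theorem initialWord_congr {i i' : ℕ → ι} {n : ℕ} (h : ∀ t < n, i t = i' t) :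
    initialWord i n = initialWord i' n := by
  simp only [initialWord]
  congr 1
  funext t
  exact h t t.2

theorem prod_map_initialWord_mul {R : Type} [Monoid R] (T : ι → R) {x : ℕ → ι} {m : ℕ}
    (hx : ∀ n, x (n + m) = x n) (k : ℕ) :
    ((initialWord x (m * k)).map T).prod = ((initialWord x m).map T).prod ^ k := by
  induction k with
  | zero => simp [initialWord]
  | succ k ih =>
    have hper : ∀ t, x (m * k + t) = x t := fun t => by
      rw [add_comm, mul_comm]
      exact (Function.Periodic.nat_mul (f := x) (c := m) hx k) t
    rw [mul_add_one, initialWord_add, List.map_append, List.prod_append, ih, pow_succ]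
    simp_rw [hper]

variable [DecidableEq ι]

/-- The number of the first `n` blocks of length `M` of `i` which equal the first block of `x`. -/
def blockCount (x : ℕ → ι) (M : ℕ) (i : ℕ → ι) (n : ℕ) : ℕ :=
  ((Finset.range n).filter fun j => ∀ t < M, i (j * M + t) = x t).card

theorem blockCount_le (x : ℕ → ι) (M : ℕ) (i : ℕ → ι) (n : ℕ) : blockCount x M i n ≤ n :=
  (Finset.card_filter_le _ _).trans_eq (Finset.card_range n)

theorem seminorm_initialWord_le {V : Type} [AddCommGroup V] [Module ℂ V]
    {T : ι → Module.End ℂ V} {N : Seminorm ℂ V} {c q : ℝ} (hc : 1 ≤ c) (hq : 0 ≤ q)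
    (hT : ∀ i y, N (T i y) ≤ c * N y) {x : ℕ → ι} {M : ℕ}
    (hx : ∀ y, N (((initialWord x M).map T).prod y) ≤ q * N y)
    (i : ℕ → ι) (n : ℕ) (y : V) :
    N (((initialWord i (n * M)).map T).prod y) ≤
      ((c ^ M) ^ n * q ^ blockCount x M i n) * N y := by
  have hc0 : 0 ≤ c := zero_le_one.trans hc
  have hword : ∀ (l : List ι) (y : V), N ((l.map T).prod y) ≤ c ^ l.length * N y := by
    intro l y
    induction l with
    | nil => simp
    | cons a l ih =>
      rw [List.map_cons, List.prod_cons, Module.End.mul_apply, List.length_cons, pow_succ']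
      calc _ ≤ c * N ((l.map T).prod y) := hT a _
        _ ≤ c * (c ^ l.length * N y) := by gcongr
        _ = _ := by ring
  induction n generalizing y with
  | zero => simp [initialWord, blockCount]
  | succ n ih =>
    rw [add_one_mul, initialWord_add, List.map_append, List.prod_append, Module.End.mul_apply]
    refine (ih _).trans ?_
    have hC : 0 ≤ (c ^ M) ^ n * q ^ blockCount x M i n := by positivity
    by_cases h : ∀ t < M, i (n * M + t) = x t
    · have hcount : blockCount x M i (n + 1) = blockCount x M i n + 1 := by
        rw [blockCount, Finset.range_add_one, Finset.filter_insert, if_pos h,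
          Finset.card_insert_of_notMem (by simp), blockCount]
      rw [initialWord_congr h, hcount]
      calc _ ≤ (c ^ M) ^ n * q ^ blockCount x M i n * (q * N y) := by gcongr; exact hx y
        _ ≤ (c ^ M) ^ n * q ^ blockCount x M i n * (q * N y) * c ^ M :=
          le_mul_of_one_le_right (by positivity) (one_le_pow₀ hc)
        _ = _ := by ring
    · have hcount : blockCount x M i (n + 1) = blockCount x M i n := by
        rw [blockCount, Finset.range_add_one, Finset.filter_insert, if_neg h, blockCount]
      rw [hcount]
      calc _ ≤ (c ^ M) ^ n * q ^ blockCount x M i n * (c ^ M * N y) := by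
            gcongr
            simpa [length_initialWord] using hword (initialWord (fun t => i (n * M + t)) M) y
        _ = _ := by ring

end Blocks

section Frequency

variable {d K : ℕ} {S : Fin K → Matrix (Fin d) (Fin d) ℂ}

theorem exists_small_rate (M : ℕ) {δ : ℝ} (hδ : 0 < δ) :
    ∃ ε : ℝ, 0 < ε ∧ ε < 1 / 2 ∧ (1 + ε) ^ M * (1 / 2 + ε) ^ δ < 1 := by
  have hcont : ContinuousAt (fun ε : ℝ => (1 + ε) ^ M * (1 / 2 + ε) ^ δ) 0 := by
    refine ContinuousAt.mul (by fun_prop) (ContinuousAt.rpow (by fun_prop) (by fun_prop) ?_)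
    left; norm_num
  have h0 : (1 + (0 : ℝ)) ^ M * (1 / 2 + 0) ^ δ < 1 := by
    simpa using Real.rpow_lt_one (x := (2 : ℝ)⁻¹) (by norm_num) (by norm_num) hδ
  have hev : ∀ᶠ ε : ℝ in 𝓝[>] 0, (1 + ε) ^ M * (1 / 2 + ε) ^ δ < 1 :=
    (hcont.eventually_lt_const h0).filter_mono nhdsWithin_le_nhds
  obtain ⟨ε, h1, h2, h3⟩ :=
    (hev.and (Ioo_mem_nhdsGT (show (0 : ℝ) < 1 / 2 by norm_num))).exists
  exact ⟨ε, h2, h3, h1⟩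

theorem wordProd_eq (i : ℕ → Fin K) (n : ℕ) :
    wordProd S i n = ((initialWord i n).map S).prod := by
  rw [initialWord, List.map_ofFn]; rfl

theorem tendsto_blockCount_div (hρ : 0 < genSpecRad S) (ν : MatrixNorm d) {x : ℕ → Fin K} {M : ℕ}
    (hM : 0 < M)
    (hx : ∀ ε > 0, ∃ N : Seminorm ℂ (Fin d → ℂ), Coercive N ∧
      (∀ a y, N (normalized S a y) ≤ (1 + ε) * N y) ∧
      ∀ y, N (((initialWord x M).map (normalized S)).prod y) ≤ (1 / 2 + ε) * N y)
    {i : ℕ → Fin K} (hi : Tendsto (fun n : ℕ => ν.N (wordProd S i n) ^ ((n : ℝ)⁻¹)) atTop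
      (𝓝 (genSpecRad S))) :
    Tendsto (fun n : ℕ => (blockCount x M i n : ℝ) / n) atTop (𝓝 0) := by
  set ρ := genSpecRad S with hρdef
  refine tendsto_order.2 ⟨fun a ha => Eventually.of_forall fun n =>
    ha.trans_le (by positivity), fun δ hδ => ?_⟩
  obtain ⟨ε, hε, hε2, hη⟩ := exists_small_rate M hδ
  set η := (1 + ε) ^ M * (1 / 2 + ε) ^ δ
  have hη0 : 0 < η := by positivity
  obtain ⟨N, hN, hNT, hNx⟩ := hx ε hε
  obtain ⟨C, hC⟩ := exists_matrixNorm_le ν hN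
  obtain ⟨η', hηη', hη'1⟩ := exists_between hη
  have hη'0 : 0 < η' := hη0.trans hηη'
  have hlow : ∀ᶠ n : ℕ in atTop, (η' * ρ ^ M) ^ n < ν.N (wordProd S i (n * M)) := by
    have hlt : η' ^ ((M : ℝ)⁻¹) * ρ < ρ :=
      mul_lt_of_lt_one_left hρ (Real.rpow_lt_one hη'0.le hη'1 (by positivity))
    have htop : Tendsto (fun n : ℕ => n * M) atTop atTop := tendsto_id.atTop_mul_const' hM
    filter_upwards [htop.eventually (hi.eventually_const_lt hlt), eventually_ge_atTop 1]
      with n hn hn1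
    have hnM : n * M ≠ 0 := by positivity
    have h := pow_lt_pow_left₀ hn (by positivity) hnM
    rw [Real.rpow_inv_natCast_pow (ν.nonneg _) hnM] at h
    refine lt_of_eq_of_lt ?_ h
    rw [mul_comm n M, pow_mul, mul_pow _ ρ M, Real.rpow_inv_natCast_pow hη'0.le hM.ne']
  have hsmall : ∀ᶠ n : ℕ in atTop, C * (η / η') ^ n < 1 := by
    have := (tendsto_pow_atTop_nhds_zero_of_lt_one (by positivity)
      ((div_lt_one hη'0).2 hηη')).const_mul C
    rw [mul_zero] at this
    exact this.eventually_lt_const one_pos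
  filter_upwards [hlow, hsmall, eventually_ge_atTop 1] with n hn hns hn1
  by_contra! hcount
  have hn0 : (0 : ℝ) < n := by exact_mod_cast hn1
  rw [le_div_iff₀ hn0] at hcount
  have hle : (1 / 2 + ε) ^ blockCount x M i n ≤ ((1 / 2 + ε) ^ δ) ^ n := by
    rw [← Real.rpow_natCast, ← Real.rpow_natCast, ← Real.rpow_mul (by positivity)]
    exact Real.rpow_le_rpow_of_exponent_ge (by positivity) (by linarith) hcount
  have hbound : ν.N (((ρ ^ (n * M) : ℝ) : ℂ)⁻¹ • wordProd S i (n * M)) ≤ C * η ^ n := by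
    refine hC _ _ fun y => ?_
    have h := seminorm_initialWord_le (by linarith) (by positivity) hNT hNx i n y
    rw [prod_normalized, length_initialWord, ← wordProd_eq] at h
    refine h.trans (mul_le_mul_of_nonneg_right ?_ (apply_nonneg N y))
    rw [mul_pow]
    gcongr
  rw [ν.homog, norm_inv, Complex.norm_real, Real.norm_of_nonneg (by positivity),
    inv_mul_le_iff₀ (by positivity)] at hbound
  have h1 := hn.trans_le hbound
  rw [mul_pow, ← pow_mul, mul_comm M n, mul_comm (η' ^ n)] at h1
  have h2 := lt_of_mul_lt_mul_left h1 (by positivity)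
  rw [div_pow, ← mul_div_assoc, div_lt_one (by positivity)] at hns
  linarith

end Frequency

section Markov

variable {K : ℕ} {Pm : Matrix (Fin K) (Fin K) ℝ} {p : Fin K → ℝ} {μ : Measure (ℕ → Fin K)}

theorem exists_periodic_of_stochastic (hK : 0 < K) (hProw : ∀ a, ∑ b, Pm a b = 1) :
    ∃ (x : ℕ → Fin K) (m : ℕ), 0 < m ∧ (∀ n, x (n + m) = x n) ∧ ∀ n, 0 < Pm (x n) (x (n + 1)) := by
  have hsucc : ∀ a, ∃ b, 0 < Pm a b := fun a => by
    by_contra! h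
    have := Finset.sum_nonpos fun b (_ : b ∈ Finset.univ) => h b
    linarith [hProw a]
  choose f hf using hsucc
  obtain ⟨a, b, hab, h⟩ := Finite.exists_ne_map_eq_of_infinite fun n : ℕ => f^[n] ⟨0, hK⟩
  wlog hlt : a < b generalizing a b
  · exact this b a hab.symm h.symm (by omega)
  refine ⟨fun n => f^[n + a] ⟨0, hK⟩, b - a, by omega, fun n => ?_, fun n => ?_⟩
  · change f^[n + (b - a) + a] _ = f^[n + a] _
    rw [show n + (b - a) + a = n + b by omega, Function.iterate_add_apply,
      Function.iterate_add_apply f n a]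
    exact congrArg _ h.symm
  · change 0 < Pm (f^[n + a] _) (f^[n + 1 + a] _)
    rw [show n + 1 + a = (n + a) + 1 by omega, Function.iterate_succ_apply']
    exact hf _

theorem measurableSet_window {n : ℕ} (j : ℕ) (w : Fin n → Fin K) :
    MeasurableSet {i : ℕ → Fin K | ∀ t : Fin n, i (j + t) = w t} := by
  rw [Set.ofPred_forall]
  exact MeasurableSet.iInter fun t => measurableSet_eq_fun (measurable_pi_apply _) measurable_const

theorem measure_window (hPnn : ∀ a b, 0 ≤ Pm a b) (hppos : ∀ k, 0 < p k)
    (hstat : ∀ b, ∑ a, p a * Pm a b = p b)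
    (hcyl : ∀ (n : ℕ) (w : Fin (n + 1) → Fin K),
      μ (cyl w) = ENNReal.ofReal (p (w 0) * ∏ t : Fin n, Pm (w t.castSucc) (w t.succ)))
    (j : ℕ) {n : ℕ} (w : Fin (n + 1) → Fin K) :
    μ {i | ∀ t : Fin (n + 1), i (j + t) = w t} =
      ENNReal.ofReal (p (w 0) * ∏ t : Fin n, Pm (w t.castSucc) (w t.succ)) := by
  induction j generalizing n w with
  | zero => simpa [cyl] using hcyl n w
  | succ j ih =>
    have hunion : {i : ℕ → Fin K | ∀ t : Fin (n + 1), i (j + 1 + t) = w t} =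
        ⋃ a, {i : ℕ → Fin K | ∀ t : Fin (n + 2), i (j + t) = (Fin.cons a w : Fin (n + 2) → _) t} := by
      ext i
      simp [Fin.forall_fin_succ (n := n + 1), add_assoc, add_comm 1]
    rw [hunion, measure_iUnion, tsum_fintype]
    · simp_rw [ih, Fin.prod_univ_succ (n := n)]
      simp only [Fin.cons_zero, Fin.cons_succ, Fin.castSucc_zero, ← Fin.succ_castSucc]
      rw [← ENNReal.ofReal_sum_of_nonneg]
      · simp_rw [← mul_assoc]
        rw [← Finset.sum_mul, hstat]
      · intro a _
        have := (hppos a).le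
        have := Finset.prod_nonneg fun (t : Fin n) (_ : t ∈ Finset.univ) =>
          hPnn (w t.castSucc) (w t.succ)
        have := hPnn a (w 0)
        positivity
    · intro a b hab
      refine Set.disjoint_left.2 fun i ha hb => hab ?_
      exact (ha 0).symm.trans (hb 0)
    · exact fun a => measurableSet_window j _

theorem blockCount_eq_sum (x : ℕ → Fin K) (M : ℕ) (i : ℕ → Fin K) (n : ℕ) :
    (blockCount x M i n : ℝ) = ∑ j ∈ Finset.range n,
      {i : ℕ → Fin K | ∀ t : Fin M, i (j * M + t) = x t}.indicator 1 i := by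
  rw [blockCount, Finset.card_filter, Nat.cast_sum]
  refine Finset.sum_congr rfl fun j _ => ?_
  simp [Set.indicator_apply, Fin.forall_iff]

theorem measurable_blockCount (x : ℕ → Fin K) (M n : ℕ) :
    Measurable fun i : ℕ → Fin K => (blockCount x M i n : ℝ) := by
  simp_rw [blockCount_eq_sum]
  exact Finset.measurable_fun_sum _ fun j _ =>
    measurable_one.indicator (measurableSet_window (n := M) (j * M) fun t => x t)

theorem integral_blockCount [IsProbabilityMeasure μ] (x : ℕ → Fin K) (M : ℕ) {r : ℝ}
    (hr : ∀ j, μ.real {i | ∀ t : Fin M, i (j + t) = x t} = r) (n : ℕ) :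
    ∫ i, (blockCount x M i n : ℝ) ∂μ = n * r := by
  have hmeas := fun j => measurableSet_window (K := K) (n := M) (j * M) fun t => x t
  simp_rw [blockCount_eq_sum]
  rw [integral_finsetSum _ fun j _ => (integrable_const 1).indicator (hmeas j)]
  simp [integral_indicator_one (hmeas _), hr]

end Markov

end MatrixWords

/-- If the canonical `(p, P)`-Markov measure of an irreducible stochastic matrix `P` with
positive stationary distribution `p` is extremal for `S`, then `S` has the spectral
finiteness property. -/
theorem finiteness_of_extremal_markov_measure
    {d K : ℕ} (hd : 2 ≤ d) (hK : 2 ≤ K)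
    (S : Fin K → Matrix (Fin d) (Fin d) ℂ) (ν : MatrixNorm d)
    (Pm : Matrix (Fin K) (Fin K) ℝ)
    (hPnn : ∀ a b, 0 ≤ Pm a b)
    (hProw : ∀ a, ∑ b, Pm a b = 1)
    (hPirr : ∀ a b, ∃ n : ℕ, 1 ≤ n ∧ 0 < (Pm ^ n) a b)
    (p : Fin K → ℝ) (hppos : ∀ k, 0 < p k) (hpsum : ∑ k, p k = 1)
    (hstat : ∀ b, ∑ a, p a * Pm a b = p b)
    (μ : Measure (ℕ → Fin K)) [IsProbabilityMeasure μ]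
    (hcyl : ∀ (n : ℕ) (w : Fin (n + 1) → Fin K),
      μ (cyl w) = ENNReal.ofReal (p (w 0) * ∏ t : Fin n, Pm (w t.castSucc) (w t.succ)))
    (hext : IsExtremal S ν.N μ) :
    HasFinitenessProperty S := by
  by_contra hS
  have : NeZero d := ⟨by omega⟩
  have hρ : 0 < genSpecRad S := by
    simpa using (MatrixWords.specRad_nonneg _).trans_lt
      (MatrixWords.specRad_lt_of_not_finiteness S hS [⟨0, by omega⟩] (by simp))
  obtain ⟨x, m, hm, hper, hxpos⟩ :=
    MatrixWords.exists_periodic_of_stochastic (by omega : 0 < K) hProw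
  have hne : MatrixWords.initialWord x m ≠ [] :=
    List.ne_nil_of_length_pos (by rwa [MatrixWords.length_initialWord])
  obtain ⟨k, hk, hk1⟩ := ((MatrixWords.exists_almost_extremal_norm (MatrixWords.normalized S)
    (MatrixWords.powTendstoZero_normalized S hS) _ hne).and (eventually_ge_atTop 1)).exists
  simp_rw [← MatrixWords.prod_map_initialWord_mul (MatrixWords.normalized S) hper] at hk
  have hM : 0 < m * k := by positivity
  obtain ⟨n, hn⟩ : ∃ n, m * k = n + 1 := ⟨m * k - 1, by omega⟩
  rw [hn] at hk hM
  have hr : ∀ j, μ.real {i | ∀ t : Fin (n + 1), i (j + t) = x t} =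
      p (x 0) * ∏ t : Fin n, Pm (x t) (x (t + 1)) := fun j => by
    rw [measureReal_def, MatrixWords.measure_window hPnn hppos hstat hcyl j fun t => x t,
      ENNReal.toReal_ofReal]
    · simp
    · exact mul_nonneg (hppos _).le (Finset.prod_nonneg fun t _ => hPnn _ _)
  have hrpos : 0 < p (x 0) * ∏ t : Fin n, Pm (x t) (x (t + 1)) :=
    mul_pos (hppos _) (Finset.prod_pos fun t _ => hxpos t)
  have hlim := tendsto_integral_of_dominated_convergence (μ := μ)
    (F := fun q i => (MatrixWords.blockCount x (n + 1) i q : ℝ) / q) (f := fun _ => 0)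
    (fun _ => (1 : ℝ))
    (fun q => ((MatrixWords.measurable_blockCount x (n + 1) q).div_const _).aestronglyMeasurable)
    (integrable_const 1)
    (fun q => Eventually.of_forall fun i => by
      rw [Real.norm_of_nonneg (by positivity)]
      exact div_le_one_of_le₀ (by exact_mod_cast MatrixWords.blockCount_le x (n + 1) i q)
        (by positivity))
    (hext.mono fun i hi => MatrixWords.tendsto_blockCount_div hρ ν hM hk hi)
  simp only [integral_div, MatrixWords.integral_blockCount x (n + 1) hr, integral_zero] at hlim
  refine hrpos.ne' (tendsto_nhds_unique (tendsto_const_nhds.congr' ?_) hlim)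
  filter_upwards [eventually_ge_atTop 1] with q hq
  rw [mul_div_cancel_left₀]
  exact_mod_cast (by omega : q ≠ 0)
end
end
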